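/- arXiv:2504.21438 — 5 statements merged into one kernel-verified Lean document; each statement's English description precedes it below -/
import Mathlib

section
/- Let V be a random vector in [0,∞)^d and let ν be a Borel measure on E = [0,∞)^d \ {0}, finite on Borel sets bounded away from 0, such that lim_{t→∞} t·P(t⁻¹V ∈ B) = ν(B) for every Borel set B ⊆ E bounded away from 0 with ν(∂B) = 0. Assume ν(𝕃₁) > 0 and ν(∂𝕃₁) = 0. Then the conditional law of t⁻¹V given V ≰ 1·t converges weakly, as t → ∞, to the probability measure B ↦ ν(B ∩ 𝕃₁)/ν(𝕃₁); that is, for every bounded continuous h : ℝ^d → ℝ, lim_{t→∞} E[h(t⁻¹V) | V ≰ t·1] = (1/ν(𝕃₁)) ∫_{𝕃₁} h dν. -/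
open MeasureTheory Filter Set

/-- Multivariate regular variation of `V` with exponent measure `ν` implies weak convergence of
the conditional law of `t⁻¹ V` given `V ≰ t·1` to `ν(· ∩ 𝕃₁)/ν(𝕃₁)`. -/
theorem conditional_law_weak_convergence
    {d : ℕ} {Ω : Type*} [MeasurableSpace Ω] (ℙ : Measure Ω) [IsProbabilityMeasure ℙ]
    (V : Ω → Fin d → ℝ) (hV : Measurable V) (hVnonneg : ∀ ω j, 0 ≤ V ω j)
    (ν : Measure (Fin d → ℝ))
    -- ν is finite on Borel subsets of E = [0,∞)^d \ {0} that are bounded away from 0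
    (hfin : ∀ B : Set (Fin d → ℝ), MeasurableSet B →
      B ⊆ {x | ∀ j, 0 ≤ x j} \ {0} → (0 : Fin d → ℝ) ∉ closure B → ν B < ⊤)
    -- regular variation: t·P(t⁻¹ V ∈ B) → ν(B) for ν-continuity sets B bounded away from 0
    (hconv : ∀ B : Set (Fin d → ℝ), MeasurableSet B →
      B ⊆ {x | ∀ j, 0 ≤ x j} \ {0} → (0 : Fin d → ℝ) ∉ closure B → ν (frontier B) = 0 →
      Tendsto (fun t : ℝ => t * (ℙ {ω | t⁻¹ • V ω ∈ B}).toReal) atTop (nhds (ν B).toReal))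
    (L1 : Set (Fin d → ℝ)) (hL1 : L1 = {x | (∀ j, 0 ≤ x j) ∧ ∃ j, 1 < x j})
    (hpos : 0 < ν L1) (hbd : ν (frontier L1) = 0) :
    ∀ h : BoundedContinuousFunction (Fin d → ℝ) ℝ,
      Tendsto (fun t : ℝ =>
          (∫ ω in {ω | ∃ j, t < V ω j}, h (t⁻¹ • V ω) ∂ℙ) /
            (ℙ {ω | ∃ j, t < V ω j}).toReal)
        atTop
        (nhds ((∫ x in L1, h x ∂ν) / (ν L1).toReal)) := by
  classical
  have hL1m : MeasurableSet L1 := by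
    rw [hL1]
    have e : {x : Fin d → ℝ | (∀ j, 0 ≤ x j) ∧ ∃ j, 1 < x j}
        = (⋂ j, {x | 0 ≤ x j}) ∩ ⋃ j, {x | 1 < x j} := by
      ext x; simp
    rw [e]
    exact (MeasurableSet.iInter fun j => measurableSet_le measurable_const (measurable_pi_apply j)).inter
      (MeasurableSet.iUnion fun j => measurableSet_lt measurable_const (measurable_pi_apply j))
  have hL1E : L1 ⊆ {x | ∀ j, 0 ≤ x j} \ {0} := by
    rw [hL1]
    rintro x ⟨h0, j, hj⟩
    refine ⟨h0, ?_⟩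
    rintro rfl
    simp only [Pi.zero_apply] at hj
    linarith
  have hL1c : (0 : Fin d → ℝ) ∉ closure L1 := by
    rw [mem_closure_iff]
    push Not
    refine ⟨⋂ j, {x | x j < 1}, isOpen_iInter_of_finite fun j =>
      isOpen_lt (continuous_apply j) continuous_const, by simp, ?_⟩
    rw [Set.eq_empty_iff_forall_notMem, hL1]
    rintro x ⟨hx, -, j, hj⟩
    have := Set.mem_iInter.1 hx j
    simp only [mem_ofPred_eq] at this
    linarith
  have hL1fin : ν L1 ≠ ⊤ := (hfin L1 hL1m hL1E hL1c).ne
  have hposR : 0 < (ν L1).toReal := ENNReal.toReal_pos hpos.ne' hL1fin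
  have hAm : ∀ t : ℝ, MeasurableSet {ω | ∃ j, t < V ω j} := by
    intro t
    rw [ofPred_exists]
    exact MeasurableSet.iUnion fun j =>
      measurableSet_lt measurable_const ((measurable_pi_apply j).comp hV)
  have hA : ∀ t : ℝ, 0 < t → {ω | ∃ j, t < V ω j} = {ω | t⁻¹ • V ω ∈ L1} := by
    intro t ht
    ext ω
    simp only [hL1, mem_ofPred_eq, Pi.smul_apply, smul_eq_mul]
    constructor
    · rintro ⟨j, hj⟩
      refine ⟨fun j => mul_nonneg (inv_nonneg.2 ht.le) (hVnonneg ω j), j, ?_⟩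
      rw [← div_eq_inv_mul, one_lt_div ht]
      exact hj
    · rintro ⟨-, j, hj⟩
      rw [← div_eq_inv_mul, one_lt_div ht] at hj
      exact ⟨j, hj⟩
  have hconvA := hconv L1 hL1m hL1E hL1c hbd
  have hev : ∀ᶠ t : ℝ in atTop, 0 < t ∧ ℙ {ω | ∃ j, t < V ω j} ≠ 0 := by
    filter_upwards [eventually_gt_atTop 0, hconvA.eventually (lt_mem_nhds hposR)] with t ht h1
    refine ⟨ht, fun h0 => ?_⟩
    rw [← hA t ht, h0] at h1
    simp at h1
  have hTm : ∀ t : ℝ, Measurable fun ω => t⁻¹ • V ω := fun t => hV.const_smul t⁻¹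
  haveI hμp : IsProbabilityMeasure (ProbabilityTheory.cond ν L1) :=
    ProbabilityTheory.cond_isProbabilityMeasure_of_finite hpos.ne' hL1fin
  let μ : ProbabilityMeasure (Fin d → ℝ) := ⟨ProbabilityTheory.cond ν L1, hμp⟩
  let μs : ℝ → ProbabilityMeasure (Fin d → ℝ) := fun t =>
    if hz : ℙ {ω | ∃ j, t < V ω j} ≠ 0 then
      ⟨(ProbabilityTheory.cond ℙ {ω | ∃ j, t < V ω j}).map (fun ω => t⁻¹ • V ω), by
        haveI := ProbabilityTheory.cond_isProbabilityMeasure hz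
        exact Measure.isProbabilityMeasure_map (hTm t).aemeasurable⟩
    else μ
  have hμs : ∀ t, ℙ {ω | ∃ j, t < V ω j} ≠ 0 → (μs t : Measure (Fin d → ℝ)) =
      (ProbabilityTheory.cond ℙ {ω | ∃ j, t < V ω j}).map (fun ω => t⁻¹ • V ω) := by
    intro t ht
    exact congrArg (fun m : ProbabilityMeasure (Fin d → ℝ) => (m : Measure (Fin d → ℝ)))
      (dif_pos ht)
  have hμ : (μ : Measure (Fin d → ℝ)) = ProbabilityTheory.cond ν L1 := rfl
  have key : ∀ {E : Set (Fin d → ℝ)}, MeasurableSet E →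
      (μ : Measure (Fin d → ℝ)) (frontier E) = 0 →
      Tendsto (fun t => (μs t : Measure (Fin d → ℝ)) E) atTop
        (nhds ((μ : Measure (Fin d → ℝ)) E)) := by
    intro E hE hfr
    rw [hμ, ProbabilityTheory.cond_apply hL1m, mul_eq_zero, ENNReal.inv_eq_zero] at hfr
    have hfr' : ν (L1 ∩ frontier E) = 0 := hfr.resolve_left hL1fin
    have hfrB : ν (frontier (E ∩ L1)) = 0 := by
      refine measure_mono_null (t := (L1 ∩ frontier E) ∪ frontier L1) ?_
        (measure_union_null hfr' hbd)
      intro x hx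
      rcases frontier_inter_subset E L1 hx with h1 | h1
      · by_cases hx1 : x ∈ L1
        · exact Or.inl ⟨hx1, h1.1⟩
        · exact Or.inr ⟨h1.2, fun hi => hx1 (interior_subset hi)⟩
      · exact Or.inr h1.2
    have hc := hconv (E ∩ L1) (hE.inter hL1m) (inter_subset_right.trans hL1E)
      (fun h0 => hL1c (closure_mono inter_subset_right h0)) hfrB
    have hq := hc.div hconvA hposR.ne'
    rw [← ENNReal.tendsto_toReal_iff (fun t => measure_ne_top _ _) (measure_ne_top _ _)]
    have hlim : ((μ : Measure (Fin d → ℝ)) E).toReal = (ν (E ∩ L1)).toReal / (ν L1).toReal := by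
      rw [hμ, ProbabilityTheory.cond_apply hL1m, ENNReal.toReal_mul, ENNReal.toReal_inv,
        inter_comm, div_eq_inv_mul]
    rw [hlim]
    refine hq.congr' ?_
    filter_upwards [hev] with t ht
    rw [hμs t ht.2, Measure.map_apply (hTm t) hE, ProbabilityTheory.cond_apply (hAm t),
      ENNReal.toReal_mul, ENNReal.toReal_inv, hA t ht.1]
    have e2 : {ω | t⁻¹ • V ω ∈ L1} ∩ (fun ω => t⁻¹ • V ω) ⁻¹' E = {ω | t⁻¹ • V ω ∈ E ∩ L1} := by
      ext ω; simp [and_comm]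
    rw [e2, Pi.div_apply, mul_div_mul_left _ _ ht.1.ne', div_eq_inv_mul]
  have hweak : Tendsto μs atTop (nhds μ) :=
    tendsto_of_forall_isOpen_le_liminf' fun G hG =>
      le_liminf_measure_open_of_forall_tendsto_measure
        (μs := fun t => (μs t : Measure (Fin d → ℝ))) key G hG
  intro h
  have hint := ProbabilityMeasure.tendsto_iff_forall_integral_tendsto.1 hweak h
  have hlim : ∫ x, h x ∂(μ : Measure (Fin d → ℝ)) = (∫ x in L1, h x ∂ν) / (ν L1).toReal := by
    rw [hμ, ProbabilityTheory.cond, integral_smul_measure, ENNReal.toReal_inv, smul_eq_mul,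
      div_eq_inv_mul]
  rw [hlim] at hint
  refine hint.congr' ?_
  filter_upwards [hev] with t ht
  rw [hμs t ht.2, integral_map (hTm t).aemeasurable h.continuous.aestronglyMeasurable,
    ProbabilityTheory.cond, integral_smul_measure, ENNReal.toReal_inv, smul_eq_mul,
    div_eq_inv_mul]
end

section
/- (Proposition 1, main part.) Let X = (X_1, …, X_d) be a random vector whose marginal distribution functions F_1, …, F_d are continuous, and let V = (1/(1 − F_j(X_j)))_{j=1}^d. Assume: (i) there is a Borel measure ν on E = [0,∞)^d \ {0}, finite on Borel sets bounded away from 0, with ν(𝕃₁) > 0, ν(∂𝕃₁) = 0, and lim_{t→∞} t·P(t⁻¹V ∈ B) = ν(B) for every Borel B ⊆ E bounded away from 0 with ν(∂B) = 0; (ii) ν({x ∈ E : x_j = 0 for some j ∈ {1,…,d}}) = 0; (iii) for each j there exist ξ_j ∈ ℝ and a_j : (1,∞) → (0,∞) such that, with b_j(t) = inf{x : F_j(x) ≥ 1 − 1/t}, lim_{t→∞} (b_j(ty) − b_j(t))/a_j(t) = (y^{ξ_j} − 1)/ξ_j for all y > 0 (interpreted as log y when ξ_j = 0). Then the conditional law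 of ((X_j − b_j(t))/a_j(t))_{j=1}^d given X ≰ b(t) converges weakly, as t → ∞, to the law of ((Y_j^{ξ_j} − 1)/ξ_j)_{j=1}^d, where Y is a random vector with law P(Y ∈ B) = ν(B ∩ 𝕃₁)/ν(𝕃₁). -/
open MeasureTheory Filter Set

theorem ext_map {d : ℕ} {Ω : Type*} [MeasurableSpace Ω] (P : ℝ → Measure Ω)
    [∀ t, IsProbabilityMeasure (P t)] (Z U : ℝ → Ω → Fin d → ℝ)
    (hZ : ∀ t, Measurable (Z t)) (hU : ∀ t, Measurable (U t))
    (μ : Measure (Fin d → ℝ)) [IsProbabilityMeasure μ] (D : Set (Fin d → ℝ))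
    (hD : ∀ᵐ x ∂μ, x ∈ D) (g : (Fin d → ℝ) → Fin d → ℝ) (hg : Measurable g)
    (hopen : ∀ G : Set (Fin d → ℝ), IsOpen G →
      μ G ≤ liminf (fun t => (P t).map (Z t) G) atTop)
    (hloc : ∀ x ∈ D, ∀ G, IsOpen G → g x ∈ G → ∃ R, IsOpen R ∧ x ∈ R ∧
      ∀ᶠ t in atTop, ∀ ω, Z t ω ∈ R → U t ω ∈ G)
    (h : BoundedContinuousFunction (Fin d → ℝ) ℝ) :
    Tendsto (fun t => ∫ ω, h (U t ω) ∂(P t)) atTop (nhds (∫ x, h (g x) ∂μ)) := by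
  have hp : ∀ t, IsProbabilityMeasure ((P t).map (U t)) := fun t =>
    Measure.isProbabilityMeasure_map (hU t).aemeasurable
  have hpg : IsProbabilityMeasure (μ.map g) := Measure.isProbabilityMeasure_map hg.aemeasurable
  let μs : ℝ → ProbabilityMeasure (Fin d → ℝ) := fun t => ⟨(P t).map (U t), hp t⟩
  let μ' : ProbabilityMeasure (Fin d → ℝ) := ⟨μ.map g, hpg⟩
  have key : Tendsto μs atTop (nhds μ') := by
    apply tendsto_of_forall_isOpen_le_liminf'
    intro G hG
    change μ.map g G ≤ liminf (fun t => (P t).map (U t) G) atTop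
    rw [Measure.map_apply hg hG.measurableSet]
    let W : Set (Fin d → ℝ) := ⋃₀ {R | IsOpen R ∧ ∀ᶠ t in atTop, ∀ ω, Z t ω ∈ R → U t ω ∈ G}
    have hW : IsOpen W := isOpen_sUnion fun R hR => hR.1
    have h1 : μ (g ⁻¹' G) ≤ μ W := by
      apply measure_mono_ae
      filter_upwards [hD] with x hx hxG
      obtain ⟨R, hR, hxR, hR2⟩ := hloc x hx G hG hxG
      exact ⟨R, ⟨hR, hR2⟩, hxR⟩
    refine h1.trans ?_
    rw [hW.measure_eq_iSup_isCompact]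
    refine iSup₂_le fun K hKW => iSup_le fun hK => ?_
    obtain ⟨R, hR, hRe, hKR⟩ : ∃ R, IsOpen R ∧ (∀ᶠ t in atTop, ∀ ω, Z t ω ∈ R → U t ω ∈ G) ∧
        K ⊆ R := by
      refine hK.induction_on (p := fun s => ∃ R, IsOpen R ∧
        (∀ᶠ t in atTop, ∀ ω, Z t ω ∈ R → U t ω ∈ G) ∧ s ⊆ R) ?_ ?_ ?_ ?_
      · exact ⟨∅, isOpen_empty, by simp, by simp⟩
      · rintro s t hst ⟨R, h1, h2, h3⟩
        exact ⟨R, h1, h2, hst.trans h3⟩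
      · rintro s t ⟨R, h1, h2, h3⟩ ⟨R', h1', h2', h3'⟩
        refine ⟨R ∪ R', h1.union h1', ?_, union_subset_union h3 h3'⟩
        filter_upwards [h2, h2'] with t a b ω hω
        exact hω.elim (a ω) (b ω)
      · intro x hx
        obtain ⟨R, ⟨hR, hR2⟩, hxR⟩ := hKW hx
        exact ⟨R, mem_nhdsWithin_of_mem_nhds (hR.mem_nhds hxR), R, hR, hR2, subset_rfl⟩
    refine (measure_mono hKR).trans ((hopen R hR).trans ?_)
    refine liminf_le_liminf ?_
    filter_upwards [hRe] with t ht
    rw [Measure.map_apply (hZ t) hR.measurableSet, Measure.map_apply (hU t) hG.measurableSet]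
    exact measure_mono fun ω hω => ht ω hω
  have := (ProbabilityMeasure.tendsto_iff_forall_integral_tendsto.1 key) h
  have e1 : ∀ t, ∫ x, h x ∂(μs t : Measure _) = ∫ ω, h (U t ω) ∂(P t) := fun t =>
    integral_map (hU t).aemeasurable h.continuous.aestronglyMeasurable
  have e2 : ∫ x, h x ∂(μ' : Measure _) = ∫ x, h (g x) ∂μ :=
    integral_map hg.aemeasurable h.continuous.aestronglyMeasurable
  simpa only [e1, e2] using this

/-- Marginal facts. -/
theorem marg_facts {Ω : Type*} [MeasurableSpace Ω] (ℙ : Measure Ω) [IsProbabilityMeasure ℙ]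
    (X : Ω → ℝ) (hX : Measurable X) (F : ℝ → ℝ) (hF : ∀ x, F x = (ℙ {ω | X ω ≤ x}).toReal)
    (hFc : Continuous F) (b : ℝ → ℝ) (hb : ∀ t, b t = sInf {x : ℝ | 1 - 1 / t ≤ F x}) :
    Monotone F ∧ (∀ x, F x ≤ 1) ∧ (∀ s, 1 < s → F (b s) = 1 - 1 / s) ∧
    (∀ s, 1 < s → ℙ {ω | b s < X ω ∧ F (X ω) ≤ 1 - 1 / s} = 0) ∧
    ℙ {ω | F (X ω) = 1} = 0 := by
  have hp : IsProbabilityMeasure (ℙ.map X) := Measure.isProbabilityMeasure_map hX.aemeasurable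
  have hcdf : F = ProbabilityTheory.cdf (ℙ.map X) := by
    ext x
    rw [hF, ProbabilityTheory.cdf_eq_real, Measure.real, Measure.map_apply hX measurableSet_Iic]
    rfl
  have hmono : Monotone F := hcdf ▸ ProbabilityTheory.monotone_cdf _
  have hle : ∀ x, F x ≤ 1 := hcdf ▸ ProbabilityTheory.cdf_le_one _
  have htop : Tendsto F atTop (nhds 1) := hcdf ▸ ProbabilityTheory.tendsto_cdf_atTop _
  have hbot : Tendsto F atBot (nhds 0) := hcdf ▸ ProbabilityTheory.tendsto_cdf_atBot _
  have hF' : ∀ x, ℙ {ω | X ω ≤ x} = ENNReal.ofReal (F x) := by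
    intro x
    rw [hF, ENNReal.ofReal_toReal (measure_ne_top _ _)]
  have hFb : ∀ s, 1 < s → F (b s) = 1 - 1 / s := by
    intro s hs
    have h0 : 0 < 1 - 1 / s := by
      rw [sub_pos, div_lt_one (by linarith)]; exact hs
    have h1 : 1 - 1 / s < 1 := by
      have : 0 < 1 / s := by positivity
      linarith
    obtain ⟨u, hu⟩ := (htop.eventually (lt_mem_nhds h1)).exists
    obtain ⟨l, hl⟩ := (hbot.eventually (gt_mem_nhds h0)).exists
    obtain ⟨x0, hx0⟩ : ∃ x, F x = 1 - 1 / s :=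
      mem_range_of_exists_le_of_exists_ge hFc ⟨l, hl.le⟩ ⟨u, hu.le⟩
    have hbdd : BddBelow {x : ℝ | 1 - 1 / s ≤ F x} := by
      refine ⟨l, fun x hx => ?_⟩
      by_contra hlt
      have := hmono (not_le.1 hlt).le
      simp only [mem_ofPred_eq] at hx
      linarith
    have hcl : IsClosed {x : ℝ | 1 - 1 / s ≤ F x} := isClosed_le continuous_const hFc
    have hmem := hcl.csInf_mem ⟨x0, hx0.ge⟩ hbdd
    rw [← hb] at hmem
    refine le_antisymm ?_ hmem
    rw [← hx0]
    apply hmono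
    rw [hb]
    exact csInf_le hbdd hx0.ge
  have hPle : ∀ s, 1 < s → ℙ {ω | F (X ω) ≤ 1 - 1 / s} ≤ ENNReal.ofReal (1 - 1 / s) := by
    intro s hs
    have h1 : 1 - 1 / s < 1 := by
      have : 0 < 1 / s := by positivity
      linarith
    obtain ⟨u, hu⟩ := (htop.eventually (lt_mem_nhds h1)).exists
    have hbdd : BddAbove {x : ℝ | F x ≤ 1 - 1 / s} := by
      refine ⟨u, fun x hx => ?_⟩
      by_contra hlt
      have := hmono (not_le.1 hlt).le
      simp only [mem_ofPred_eq] at hx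
      linarith
    have hcl : IsClosed {x : ℝ | F x ≤ 1 - 1 / s} := isClosed_le hFc continuous_const
    have hmem := hcl.csSup_mem ⟨b s, (hFb s hs).le⟩ hbdd
    calc ℙ {ω | F (X ω) ≤ 1 - 1 / s} ≤ ℙ {ω | X ω ≤ sSup {x : ℝ | F x ≤ 1 - 1 / s}} :=
          measure_mono fun ω hω => le_csSup hbdd hω
      _ ≤ _ := by rw [hF']; exact ENNReal.ofReal_le_ofReal hmem
  refine ⟨hmono, hle, hFb, ?_, ?_⟩
  · intro s hs
    have e : {ω | b s < X ω ∧ F (X ω) ≤ 1 - 1 / s} =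
        {ω | F (X ω) ≤ 1 - 1 / s} \ {ω | X ω ≤ b s} := by
      ext ω; simp [and_comm]
    rw [e, measure_sdiff _ (measurableSet_le hX measurable_const).nullMeasurableSet
      (measure_ne_top _ _), hF', hFb s hs]
    · exact tsub_eq_zero_of_le (hPle s hs)
    · intro ω hω
      have := hmono hω
      rwa [hFb s hs] at this
  · have hs : ∀ s : ℝ, 1 < s → ℙ {ω | F (X ω) = 1} ≤ ENNReal.ofReal (1 / s) := by
      intro s hs
      have : {ω | F (X ω) = 1} ⊆ {ω | X ω ≤ b s}ᶜ := by
        intro ω hω hle'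
        have h2 := hmono hle'
        rw [hFb s hs] at h2
        have : 0 < 1 / s := by positivity
        simp only [mem_ofPred_eq] at hω
        linarith
      refine (measure_mono this).trans ?_
      rw [prob_compl_eq_one_sub (measurableSet_le hX measurable_const), hF', hFb s hs,
        ← ENNReal.ofReal_one, ← ENNReal.ofReal_sub]
      · simp
      · rw [sub_nonneg, div_le_one (by linarith)]; exact hs.le
    refine le_antisymm ?_ zero_le
    have lim : Tendsto (fun s : ℝ => ENNReal.ofReal (1 / s)) atTop (nhds 0) := by
      rw [← ENNReal.ofReal_zero]
      refine ENNReal.tendsto_ofReal ?_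
      exact tendsto_const_nhds.div_atTop tendsto_id
    exact ge_of_tendsto lim ((eventually_gt_atTop 1).mono hs)

/-- Proposition 1, main part: under multivariate regular variation of the unit-Pareto
standardized vector `V`, no mass of `ν` on the coordinate hyperplanes, and the marginal
extreme-value condition on the tail quantile functions `b_j`, the conditional law of
`((X_j - b_j(t))/a_j(t))_j` given `X ≰ b(t)` converges weakly to the law of
`((Y_j^{ξ_j} - 1)/ξ_j)_j` where `Y` has law `ν(· ∩ 𝕃₁)/ν(𝕃₁)`. -/
theorem mgp_weak_convergence
    {d : ℕ} {Ω : Type*} [MeasurableSpace Ω] (ℙ : Measure Ω) [IsProbabilityMeasure ℙ]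
    (X : Ω → Fin d → ℝ) (hX : Measurable X)
    (F : Fin d → ℝ → ℝ)
    (hFdef : ∀ j x, F j x = (ℙ {ω | X ω j ≤ x}).toReal)
    (hFcont : ∀ j, Continuous (F j))
    (V : Ω → Fin d → ℝ) (hVdef : ∀ ω j, V ω j = 1 / (1 - F j (X ω j)))
    (ν : Measure (Fin d → ℝ))
    -- (i) ν is finite on Borel subsets of E = [0,∞)^d \ {0} bounded away from 0 ...
    (hfin : ∀ B : Set (Fin d → ℝ), MeasurableSet B →
      B ⊆ {x | ∀ j, 0 ≤ x j} \ {0} → (0 : Fin d → ℝ) ∉ closure B → ν B < ⊤)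
    -- ... and t·P(t⁻¹ V ∈ B) → ν(B) for ν-continuity sets B bounded away from 0
    (hconv : ∀ B : Set (Fin d → ℝ), MeasurableSet B →
      B ⊆ {x | ∀ j, 0 ≤ x j} \ {0} → (0 : Fin d → ℝ) ∉ closure B → ν (frontier B) = 0 →
      Tendsto (fun t : ℝ => t * (ℙ {ω | t⁻¹ • V ω ∈ B}).toReal) atTop (nhds (ν B).toReal))
    (L1 : Set (Fin d → ℝ)) (hL1 : L1 = {x | (∀ j, 0 ≤ x j) ∧ ∃ j, 1 < x j})
    (hpos : 0 < ν L1) (hbd : ν (frontier L1) = 0)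
    -- (ii) ν puts no mass on points of E with a vanishing coordinate
    (hzero : ν {x : Fin d → ℝ | (∀ j, 0 ≤ x j) ∧ x ≠ 0 ∧ ∃ j, x j = 0} = 0)
    -- (iii) marginal extreme-value condition
    (ξ : Fin d → ℝ) (a : Fin d → ℝ → ℝ) (ha : ∀ j, ∀ t : ℝ, 1 < t → 0 < a j t)
    (b : Fin d → ℝ → ℝ) (hb : ∀ j t, b j t = sInf {x : ℝ | 1 - 1 / t ≤ F j x})
    (hmarg : ∀ j, ∀ y : ℝ, 0 < y →
      Tendsto (fun t : ℝ => (b j (t * y) - b j t) / a j t) atTop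
        (nhds (if ξ j = 0 then Real.log y else (y ^ ξ j - 1) / ξ j))) :
    ∀ h : BoundedContinuousFunction (Fin d → ℝ) ℝ,
      Tendsto (fun t : ℝ =>
          (∫ ω in {ω | ∃ j, b j t < X ω j},
              h (fun j => (X ω j - b j t) / a j t) ∂ℙ) /
            (ℙ {ω | ∃ j, b j t < X ω j}).toReal)
        atTop
        (nhds ((∫ x in L1,
            h (fun j => if ξ j = 0 then Real.log (x j) else (x j ^ ξ j - 1) / ξ j) ∂ν) /
          (ν L1).toReal)) := by
  intro h
  have MF := fun j => marg_facts ℙ (fun ω => X ω j) (measurable_pi_iff.1 hX j) (F j) (hFdef j)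
    (hFcont j) (b j) (hb j)
  have hXm : ∀ j, Measurable fun ω => X ω j := measurable_pi_iff.1 hX
  have hVm : Measurable V := by
    refine measurable_pi_iff.2 fun j => ?_
    have : (fun ω => V ω j) = fun ω => 1 / (1 - F j (X ω j)) := funext fun ω => hVdef ω j
    rw [this]
    exact measurable_const.div (measurable_const.sub ((hFcont j).measurable.comp (hXm j)))
  have hV0 : ∀ ω j, 0 ≤ V ω j := by
    intro ω j
    rw [hVdef]
    exact div_nonneg zero_le_one (sub_nonneg.2 ((MF j).2.1 _))
  -- sandwich facts
  have hlow : ∀ s ω j, 1 < s → s < V ω j → b j s < X ω j := by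
    intro s ω j hs hsV
    by_contra hle
    have h1 := (MF j).1 (not_lt.1 hle)
    rw [(MF j).2.2.1 s hs] at h1
    rw [hVdef] at hsV
    have h2 : 0 < 1 - F j (X ω j) := one_div_pos.1 (by linarith)
    have h3 := (lt_one_div (by linarith) h2).1 hsV
    linarith
  have hupp : ∀ s ω j, 1 < s → 0 < V ω j → V ω j < s → X ω j ≤ b j s := by
    intro s ω j hs hV hsV
    by_contra hle
    have h1 := (MF j).1 (not_le.1 hle).le
    rw [(MF j).2.2.1 s hs] at h1
    rw [hVdef] at hsV hV
    have h2 : 0 < 1 - F j (X ω j) := one_div_pos.1 hV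
    have h3 := (one_div_lt h2 (by linarith)).1 hsV
    linarith
  let Z : ℝ → Ω → Fin d → ℝ := fun t ω => t⁻¹ • V ω
  have hZm : ∀ t, Measurable (Z t) := fun t => hVm.const_smul t⁻¹
  have hZ0 : ∀ t, 0 < t → ∀ ω j, 0 ≤ Z t ω j := by
    intro t ht ω j
    exact mul_nonneg (inv_nonneg.2 ht.le) (hV0 ω j)
  let A : ℝ → Set Ω := fun t => {ω | ∃ j, b j t < X ω j}
  have hAm : ∀ t, MeasurableSet (A t) := by
    intro t
    have : A t = ⋃ j, {ω | b j t < X ω j} := by ext ω; simp [A]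
    rw [this]
    exact MeasurableSet.iUnion fun j => measurableSet_lt measurable_const (hXm j)
  have hAZ : ∀ t, 1 < t → A t =ᵐ[ℙ] (Z t ⁻¹' L1 : Set Ω) := by
    intro t ht
    have n1 : ∀ᵐ ω ∂ℙ, ∀ j, ¬ (b j t < X ω j ∧ F j (X ω j) ≤ 1 - 1 / t) := by
      rw [ae_all_iff]
      intro j
      have := (MF j).2.2.2.1 t ht
      rw [ae_iff]
      simpa using this
    have n2 : ∀ᵐ ω ∂ℙ, ∀ j, ¬ (F j (X ω j) = 1) := by
      rw [ae_all_iff]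
      intro j
      have := (MF j).2.2.2.2
      rw [ae_iff]
      simpa using this
    refine eventuallyEq_set.2 ?_
    filter_upwards [n1, n2] with ω h1 h2
    constructor
    · rintro ⟨j, hj⟩
      change Z t ω ∈ L1
      rw [hL1]
      refine ⟨hZ0 t (by linarith) ω, j, ?_⟩
      change 1 < t⁻¹ * V ω j
      have h3 : 1 - 1 / t < F j (X ω j) := not_le.1 fun hle => h1 j ⟨hj, hle⟩
      have h4 : 0 < 1 - F j (X ω j) :=
        sub_pos.2 (lt_of_le_of_ne ((MF j).2.1 _) (h2 j))
      rw [lt_inv_mul_iff₀ (by linarith), mul_one, hVdef]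
      rw [lt_one_div (by linarith) h4]
      linarith
    · intro hω
      change Z t ω ∈ L1 at hω
      rw [hL1] at hω
      obtain ⟨-, j, hj⟩ := hω
      change 1 < t⁻¹ * V ω j at hj
      rw [lt_inv_mul_iff₀ (by linarith), mul_one] at hj
      exact ⟨j, hlow t ω j ht hj⟩
  -- facts on L1
  have hL1m : MeasurableSet L1 := by
    have : L1 = (⋂ j, {x | 0 ≤ x j}) ∩ ⋃ j, {x : Fin d → ℝ | 1 < x j} := by
      rw [hL1]; ext x; simp
    rw [this]
    exact (MeasurableSet.iInter fun j => measurableSet_le measurable_const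
      (measurable_pi_apply j)).inter (MeasurableSet.iUnion fun j =>
        measurableSet_lt measurable_const (measurable_pi_apply j))
  have hL1E : L1 ⊆ {x | ∀ j, 0 ≤ x j} \ {0} := by
    rw [hL1]
    rintro x ⟨hx, j, hj⟩
    refine ⟨hx, ?_⟩
    rintro rfl
    simp at hj
    linarith
  have hL1c : (0 : Fin d → ℝ) ∉ closure L1 := by
    have hc : IsClosed (⋃ j, {x : Fin d → ℝ | 1 ≤ x j}) :=
      isClosed_iUnion_of_finite fun j => isClosed_le continuous_const (continuous_apply j)
    have hsub : L1 ⊆ ⋃ j, {x : Fin d → ℝ | 1 ≤ x j} := by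
      rw [hL1]
      rintro x ⟨-, j, hj⟩
      exact mem_iUnion.2 ⟨j, hj.le⟩
    intro h0
    obtain ⟨j, hj⟩ := mem_iUnion.1 (closure_minimal hsub hc h0)
    have : (1 : ℝ) ≤ 0 := hj
    linarith
  have hνfin : ν L1 < ⊤ := hfin L1 hL1m hL1E hL1c
  have hν0 : 0 < (ν L1).toReal := ENNReal.toReal_pos hpos.ne' hνfin.ne
  have hlimL1 := hconv L1 hL1m hL1E hL1c hbd
  have hZpos : ∀ᶠ t : ℝ in atTop, 1 < t ∧ ℙ (A t) ≠ 0 := by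
    filter_upwards [hlimL1.eventually (lt_mem_nhds hν0), eventually_gt_atTop 1] with t ht ht1
    refine ⟨ht1, ?_⟩
    rw [measure_congr (hAZ t ht1)]
    intro h0
    have h0' : ℙ {ω | t⁻¹ • V ω ∈ L1} = 0 := h0
    rw [h0'] at ht
    simp at ht
  classical
  let P : ℝ → Measure Ω := fun t => if ℙ (A t) = 0 then ℙ else ProbabilityTheory.cond ℙ (A t)
  have hP : ∀ t, IsProbabilityMeasure (P t) := by
    intro t
    by_cases h0 : ℙ (A t) = 0
    · simp only [P, h0, if_true]; infer_instance
    · simp only [P, h0, if_false]; exact ProbabilityTheory.cond_isProbabilityMeasure h0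
  have hPe : ∀ t, ℙ (A t) ≠ 0 → P t = ProbabilityTheory.cond ℙ (A t) := fun t h0 => if_neg h0
  let μ : Measure (Fin d → ℝ) := ProbabilityTheory.cond ν L1
  have hμ : IsProbabilityMeasure μ :=
    ProbabilityTheory.cond_isProbabilityMeasure_of_finite hpos.ne' hνfin.ne
  have hPZ : ∀ t, IsProbabilityMeasure ((P t).map (Z t)) := fun t =>
    Measure.isProbabilityMeasure_map (hZm t).aemeasurable
  have hopen : ∀ G : Set (Fin d → ℝ), IsOpen G →
      μ G ≤ liminf (fun t => (P t).map (Z t) G) atTop := by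
    intro G hG
    refine le_liminf_measure_open_of_forall_tendsto_measure ?_ G hG
    intro E hE hfr
    have hfr' : ν (L1 ∩ frontier E) = 0 := by
      have h1 : (ν L1)⁻¹ * ν (L1 ∩ frontier E) = 0 := by
        rw [← ProbabilityTheory.cond_apply hL1m]; exact hfr
      rcases mul_eq_zero.1 h1 with h2 | h2
      · exact absurd (ENNReal.inv_eq_zero.1 h2) hνfin.ne
      · exact h2
    have hfrB : ν (frontier (E ∩ L1)) = 0 := by
      refine measure_mono_null (t := (L1 ∩ frontier E) ∪ frontier L1) ?_
        (measure_union_null hfr' hbd)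
      intro x hx
      by_cases hxL : x ∈ frontier L1
      · exact Or.inr hxL
      · rcases frontier_inter_subset E L1 hx with h1 | h1
        · refine Or.inl ⟨?_, h1.1⟩
          by_contra hn
          exact hxL ⟨h1.2, fun hi => hn (interior_subset hi)⟩
        · exact absurd h1.2 hxL
    have hlim := hconv (E ∩ L1) (hE.inter hL1m) (inter_subset_right.trans hL1E)
      (fun h0 => hL1c (closure_mono inter_subset_right h0)) hfrB
    have hq := hlim.div hlimL1 hν0.ne'
    rw [← ENNReal.tendsto_toReal_iff (fun t => measure_ne_top _ _) (measure_ne_top _ _)]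
    have e : (μ E).toReal = (ν (E ∩ L1)).toReal / (ν L1).toReal := by
      change ((ProbabilityTheory.cond ν L1) E).toReal = _
      rw [ProbabilityTheory.cond_apply hL1m, ENNReal.toReal_mul, ENNReal.toReal_inv,
        inter_comm, div_eq_inv_mul]
    rw [e]
    refine hq.congr' ?_
    filter_upwards [hZpos] with t ht
    have hA := hAZ t ht.1
    have e1 : ℙ {ω | t⁻¹ • V ω ∈ L1} = ℙ (A t) := (measure_congr hA).symm
    have e2 : ℙ {ω | t⁻¹ • V ω ∈ E ∩ L1} = ℙ (A t ∩ Z t ⁻¹' E) := by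
      rw [inter_comm (A t)]
      exact (measure_congr ((ae_eq_refl (Z t ⁻¹' E : Set Ω)).inter hA)).symm
    simp only [Pi.div_apply]
    rw [e1, e2, Measure.map_apply (hZm t) hE, hPe t ht.2, ProbabilityTheory.cond_apply (hAm t),
      ENNReal.toReal_mul, ENNReal.toReal_inv, mul_div_mul_left _ _ (by linarith [ht.1] : t ≠ 0),
      div_eq_inv_mul]
  let g1 : Fin d → ℝ → ℝ := fun j y => if ξ j = 0 then Real.log y else (y ^ ξ j - 1) / ξ j
  have hg1m : ∀ j, Measurable (g1 j) := by
    intro j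
    by_cases h0 : ξ j = 0
    · simp only [g1, h0, if_true]; exact Real.measurable_log
    · simp only [g1, h0, if_false]
      exact ((measurable_id.pow_const _).sub_const _).div_const _
  have hg1c : ∀ j y, 0 < y → ContinuousAt (g1 j) y := by
    intro j y hy
    by_cases h0 : ξ j = 0
    · simp only [g1, h0, if_true]; exact Real.continuousAt_log hy.ne'
    · simp only [g1, h0, if_false]
      exact ((Real.continuousAt_rpow_const _ _ (Or.inl hy.ne')).sub continuousAt_const).div_const _
  let U : ℝ → Ω → Fin d → ℝ := fun t ω j => (X ω j - b j t) / a j t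
  have hUm : ∀ t, Measurable (U t) := fun t =>
    measurable_pi_iff.2 fun j => ((hXm j).sub_const _).div_const _
  have hD : ∀ᵐ x ∂μ, x ∈ {x : Fin d → ℝ | ∀ j, 0 < x j} := by
    have n1 : ∀ᵐ x ∂μ, x ∈ L1 := ProbabilityTheory.ae_cond_mem hL1m
    have n2 : ∀ᵐ x ∂μ, x ∉ {x : Fin d → ℝ | (∀ j, 0 ≤ x j) ∧ x ≠ 0 ∧ ∃ j, x j = 0} :=
      ProbabilityTheory.cond_absolutelyContinuous.ae_le (measure_eq_zero_iff_ae_notMem.1 hzero)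
    filter_upwards [n1, n2] with x hx1 hx2 j
    have hxE := hL1E hx1
    refine lt_of_le_of_ne (hxE.1 j) fun h0 => hx2 ⟨hxE.1, hxE.2, j, h0.symm⟩
  have hloc : ∀ x ∈ {x : Fin d → ℝ | ∀ j, 0 < x j}, ∀ G, IsOpen G →
      (fun j => g1 j (x j)) ∈ G → ∃ R, IsOpen R ∧ x ∈ R ∧
      ∀ᶠ t in atTop, ∀ ω, Z t ω ∈ R → U t ω ∈ G := by
    intro x hx G hG hxG
    obtain ⟨ε, hε, hball⟩ := Metric.isOpen_iff.1 hG _ hxG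
    have hy : ∀ j, ∃ y1 y2, 0 < y1 ∧ y1 < x j ∧ x j < y2 ∧
        dist (g1 j y1) (g1 j (x j)) < ε ∧ dist (g1 j y2) (g1 j (x j)) < ε := by
      intro j
      have hn : {y | dist (g1 j y) (g1 j (x j)) < ε} ∩ Ioi 0 ∈ nhds (x j) :=
        inter_mem ((hg1c j (x j) (hx j)).eventually (Metric.ball_mem_nhds _ hε))
          (Ioi_mem_nhds (hx j))
      obtain ⟨l, u, hlu, hsub⟩ := mem_nhds_iff_exists_Ioo_subset.1 hn
      obtain ⟨y1, hy1⟩ := exists_between hlu.1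
      obtain ⟨y2, hy2⟩ := exists_between hlu.2
      have m1 := hsub ⟨hy1.1, hy1.2.trans hlu.2⟩
      have m2 := hsub ⟨hlu.1.trans hy2.1, hy2.2⟩
      exact ⟨y1, y2, m1.2, hy1.2, hy2.1, m1.1, m2.1⟩
    choose y1 y2 h0 h1 h2 h3 h4 using hy
    refine ⟨Set.pi univ fun j => Ioo (y1 j) (y2 j), isOpen_set_pi finite_univ
      fun j _ => isOpen_Ioo, fun j _ => ⟨h1 j, h2 j⟩, ?_⟩
    have ev : ∀ᶠ t in atTop, ∀ j,
        dist ((b j (t * y1 j) - b j t) / a j t) (g1 j (x j)) < ε ∧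
        dist ((b j (t * y2 j) - b j t) / a j t) (g1 j (x j)) < ε ∧ 1 < t * y1 j := by
      rw [eventually_all]
      intro j
      have l1 := (hmarg j (y1 j) (h0 j)).eventually
        (Metric.isOpen_ball.mem_nhds (h3 j : g1 j (y1 j) ∈ Metric.ball (g1 j (x j)) ε))
      have l2 := (hmarg j (y2 j) ((hx j).trans (h2 j))).eventually
        (Metric.isOpen_ball.mem_nhds (h4 j : g1 j (y2 j) ∈ Metric.ball (g1 j (x j)) ε))
      have l3 := (tendsto_id.atTop_mul_const (h0 j)).eventually (eventually_gt_atTop (1 : ℝ))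
      filter_upwards [l1, l2, l3] with t a1 a2 a3
      exact ⟨a1, a2, a3⟩
    filter_upwards [ev, eventually_gt_atTop (1 : ℝ)] with t ht ht1 ω hω
    apply hball
    rw [Metric.mem_ball, dist_pi_lt_iff hε]
    intro j
    obtain ⟨e1, e2, e3⟩ := ht j
    have ht0 : 0 < t := by linarith
    have hωj := hω j (mem_univ j)
    have z1 : y1 j < t⁻¹ * V ω j := hωj.1
    have z2 : t⁻¹ * V ω j < y2 j := hωj.2
    rw [lt_inv_mul_iff₀ ht0] at z1
    rw [inv_mul_lt_iff₀ ht0] at z2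
    have hp1 := hlow _ ω j e3 z1
    have hp2 := hupp _ ω j ((e3.trans z1).trans z2) (by linarith) z2
    have haj := ha j t ht1
    have q1 : (b j (t * y1 j) - b j t) / a j t ≤ (X ω j - b j t) / a j t := by
      gcongr
    have q2 : (X ω j - b j t) / a j t ≤ (b j (t * y2 j) - b j t) / a j t := by
      gcongr
    rw [Real.dist_eq, abs_lt] at e1 e2 ⊢
    change -ε < (X ω j - b j t) / a j t - g1 j (x j) ∧ (X ω j - b j t) / a j t - g1 j (x j) < ε
    constructor <;> linarith [e1.1, e2.2]
  have key := ext_map P Z U hZm hUm μ {x | ∀ j, 0 < x j} hD (fun x j => g1 j (x j))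
    (measurable_pi_iff.2 fun j => (hg1m j).comp (measurable_pi_apply j)) hopen hloc h
  have elim : ∫ x, h (fun j => g1 j (x j)) ∂μ =
      (∫ x in L1, h (fun j => g1 j (x j)) ∂ν) / (ν L1).toReal := by
    change ∫ x, h (fun j => g1 j (x j)) ∂((ν L1)⁻¹ • ν.restrict L1) = _
    rw [integral_smul_measure, ENNReal.toReal_inv, smul_eq_mul, div_eq_inv_mul]
  rw [elim] at key
  refine key.congr' ?_
  filter_upwards [hZpos] with t ht
  rw [hPe t ht.2]
  change ∫ ω, h (U t ω) ∂((ℙ (A t))⁻¹ • ℙ.restrict (A t)) = _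
  rw [integral_smul_measure, ENNReal.toReal_inv, smul_eq_mul, div_eq_inv_mul]
end

section
/- (Proposition 1, consequence along the threshold curve.) Under the hypotheses of Proposition 1 (continuous margins F_j of X; multivariate regular variation of V = (1/(1−F_j(X_j)))_j with exponent measure ν satisfying ν(𝕃₁) > 0, ν(∂𝕃₁) = 0 and ν({x : x_j = 0 for some j}) = 0; and the marginal limit (b_j(ty) − b_j(t))/a_j(t) → (y^{ξ_j} − 1)/ξ_j for all y > 0), define σ_j(u) = a_j(1/(1 − F_j(u))) for u with F_j(u) < 1, and the excess vector Y_{u(t)} = X − b(t) conditional on X ≰ b(t). Then the conditional law of ((X_j − b_j(t))/σ_j(b_j(t)))_{j=1}^d given X ≰ b(t) converges weakly, as t → ∞, to the law of ((Y_j^{ξ_j} − 1)/ξ_j)_{j=1}^d, where Y has law P(Y ∈ B) = ν(B ∩ 𝕃₁)/ν(𝕃₁). -/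
open MeasureTheory Filter Set

lemma mgp_level_null (μ : Measure ℝ) [IsProbabilityMeasure μ]
    (hc : Continuous (ProbabilityTheory.cdf μ)) (s : ℝ) :
    μ {x | ProbabilityTheory.cdf μ x = s} = 0 := by
  set F := ProbabilityTheory.cdf μ with hF
  have hIoc : ∀ q r : ℝ, F q = F r → μ (Ioc q r) = 0 := by
    intro q r h
    rw [← ProbabilityTheory.measure_cdf μ, StieltjesFunction.measure_Ioc]
    rw [← hF, h]; simp
  have hsing : ∀ x : ℝ, μ {x} = 0 := by
    intro x
    rw [← ProbabilityTheory.measure_cdf μ, StieltjesFunction.measure_singleton]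
    have : Function.leftLim F x = F x :=
      leftLim_eq_of_tendsto
        (hc.continuousAt.tendsto.mono_left nhdsWithin_le_nhds)
    rw [← hF, this]; simp
  have hsub : ∀ S : Set ℝ, S.Subsingleton → μ S = 0 := by
    intro S hS
    rcases hS.eq_empty_or_singleton with h | ⟨x, h⟩
    · simp [h]
    · rw [h]; exact hsing x
  have hcov : {x | F x = s} ⊆ {x | F x = s ∧ ∀ y, F y = s → y ≤ x} ∪
      {x | F x = s ∧ ∀ y, F y = s → x ≤ y} ∪
      ⋃ (q : ℚ), ⋃ (r : ℚ), ⋃ (_ : F q = F r), Ioc (q : ℝ) r := by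
    intro x hx
    by_cases h1 : ∀ y, F y = s → y ≤ x
    · exact Or.inl (Or.inl ⟨hx, h1⟩)
    by_cases h2 : ∀ y, F y = s → x ≤ y
    · exact Or.inl (Or.inr ⟨hx, h2⟩)
    right
    push Not at h1 h2
    obtain ⟨z, hz, hxz⟩ := h1
    obtain ⟨y, hy, hyx⟩ := h2
    obtain ⟨q, hq1, hq2⟩ := exists_rat_btwn hyx
    obtain ⟨r, hr1, hr2⟩ := exists_rat_btwn hxz
    have m := ProbabilityTheory.monotone_cdf μ
    have e1 : F q = s := le_antisymm ((m hq2.le).trans hx.le) (hy.symm.le.trans (m hq1.le))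
    have e2 : F r = s := le_antisymm ((m hr2.le).trans hz.le) (hx.symm.le.trans (m hr1.le))
    simp only [mem_iUnion]
    exact ⟨q, r, e1.trans e2.symm, hq2, hr1.le⟩
  refine measure_mono_null hcov (measure_union_null (measure_union_null ?_ ?_) ?_)
  · exact hsub _ fun x hx y hy => le_antisymm (hy.2 x hx.1) (hx.2 y hy.1)
  · exact hsub _ fun x hx y hy => le_antisymm (hx.2 y hy.1) (hy.2 x hx.1)
  · exact measure_iUnion_null fun q => measure_iUnion_null fun r => measure_iUnion_null fun h =>
      hIoc _ _ h

lemma mgp_ae_good (μ : Measure ℝ) [IsProbabilityMeasure μ]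
    (hc : Continuous (ProbabilityTheory.cdf μ)) :
    ∀ᵐ x ∂μ, 0 < ProbabilityTheory.cdf μ x ∧ ProbabilityTheory.cdf μ x < 1 ∧
      ∀ y < x, ProbabilityTheory.cdf μ y < ProbabilityTheory.cdf μ x := by
  have h : ∀ s, ∀ᵐ x ∂μ, ProbabilityTheory.cdf μ x ≠ s := fun s => by
    rw [ae_iff]; simpa using mgp_level_null μ hc s
  have hq : ∀ᵐ x ∂μ, ∀ q : ℚ, ProbabilityTheory.cdf μ x ≠ ProbabilityTheory.cdf μ q :=
    ae_all_iff.2 fun q => h _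
  filter_upwards [h 0, h 1, hq] with x h0 h1 h2
  have m := ProbabilityTheory.monotone_cdf μ
  refine ⟨lt_of_le_of_ne (ProbabilityTheory.cdf_nonneg μ x) h0.symm,
    lt_of_le_of_ne (ProbabilityTheory.cdf_le_one μ x) h1, fun y hy => ?_⟩
  obtain ⟨q, hq1, hq2⟩ := exists_rat_btwn hy
  exact (m hq1.le).trans_lt (lt_of_le_of_ne (m hq2.le) (h2 q).symm)

lemma mgp_quantile (μ : Measure ℝ) [IsProbabilityMeasure μ]
    (hc : Continuous (ProbabilityTheory.cdf μ)) (p : ℝ) (h0 : 0 < p) (h1 : p < 1) :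
    IsLeast {x | p ≤ ProbabilityTheory.cdf μ x} (sInf {x | p ≤ ProbabilityTheory.cdf μ x}) ∧
    ProbabilityTheory.cdf μ (sInf {x | p ≤ ProbabilityTheory.cdf μ x}) = p := by
  set F := ProbabilityTheory.cdf μ with hF
  obtain ⟨u, hu⟩ := ((ProbabilityTheory.tendsto_cdf_atBot μ).eventually (gt_mem_nhds h0)).exists
  obtain ⟨v, hv⟩ := ((ProbabilityTheory.tendsto_cdf_atTop μ).eventually (lt_mem_nhds h1)).exists
  have m := ProbabilityTheory.monotone_cdf μ
  have hne : {x | p ≤ F x}.Nonempty := ⟨v, hv.le⟩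
  have hbd : BddBelow {x | p ≤ F x} := ⟨u, fun x hx => by
    by_contra hlt
    exact absurd ((hx.trans (m (not_le.1 hlt).le)).trans_lt hu) (lt_irrefl _)⟩
  have hcl : IsClosed {x | p ≤ F x} := isClosed_le continuous_const hc
  have hmem := hcl.csInf_mem hne hbd
  refine ⟨⟨hmem, fun x hx => csInf_le hbd hx⟩, le_antisymm ?_ hmem⟩
  obtain ⟨w, hw⟩ : p ∈ range F := mem_range_of_exists_le_of_exists_ge hc ⟨u, hu.le⟩ ⟨v, hv.le⟩
  exact (m (csInf_le hbd (show p ≤ F w from hw.ge))).trans hw.le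

lemma mgp_unif (f : ℝ → ℝ → ℝ) (φ : ℝ → ℝ) (hφ : ∀ y, 0 < y → ContinuousAt φ y)
    (hm : ∀ δ > 0, ∀ᶠ t in atTop, MonotoneOn (f t) (Ici δ))
    (hl : ∀ y, 0 < y → Tendsto (fun t => f t y) atTop (nhds (φ y)))
    (δ M : ℝ) (hδ : 0 < δ) : TendstoUniformlyOn f φ atTop (Icc δ M) := by
  rw [← tendstoLocallyUniformlyOn_iff_tendstoUniformlyOn_of_compact isCompact_Icc,
    Metric.tendstoLocallyUniformlyOn_iff]
  intro ε hε x hx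
  have hx0 : 0 < x := hδ.trans_le hx.1
  obtain ⟨η, hη, hηb⟩ := Metric.continuousAt_iff.1 (hφ x hx0) (ε / 4) (by positivity)
  set r := min (η / 2) (x / 2) with hr
  have hr0 : 0 < r := by positivity
  have hrη : r < η := (min_le_left _ _).trans_lt (by linarith)
  have hrx : r < x := (min_le_right _ _).trans_lt (by linarith)
  refine ⟨Icc (x - r) (x + r), mem_nhdsWithin_of_mem_nhds
    (Icc_mem_nhds (by linarith) (by linarith)), ?_⟩
  filter_upwards [hm (x - r) (by linarith),
    Metric.tendsto_nhds.1 (hl (x - r) (by linarith)) (ε / 4) (by positivity),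
    Metric.tendsto_nhds.1 (hl (x + r) (by linarith)) (ε / 4) (by positivity)] with t ht h1 h2 y hy
  have m1 := ht (mem_Ici.2 le_rfl) (mem_Ici.2 hy.1) hy.1
  have m2 := ht (mem_Ici.2 hy.1) (mem_Ici.2 (hy.1.trans hy.2)) hy.2
  have c1 := @hηb (x - r) (by rw [Real.dist_eq, abs_lt]; constructor <;> linarith)
  have c2 := @hηb (x + r) (by rw [Real.dist_eq, abs_lt]; constructor <;> linarith)
  have c3 := @hηb y (by rw [Real.dist_eq, abs_lt]; constructor <;> linarith [hy.1, hy.2])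
  rw [Real.dist_eq, abs_lt] at *
  constructor <;> linarith [c1.1, c1.2, c2.1, c2.2, c3.1, c3.2, h1.1, h1.2, h2.1, h2.2]

/-- Convergence of integrals from convergence on null-boundary sets. -/
lemma mgp_stepA {d : ℕ} {Ω : Type*} [MeasurableSpace Ω] (ℙ : Measure Ω) [IsProbabilityMeasure ℙ]
    (V : Ω → Fin d → ℝ) (hV : Measurable V) (ν : Measure (Fin d → ℝ))
    (hconv : ∀ B : Set (Fin d → ℝ), MeasurableSet B →
      B ⊆ {x | ∀ j, 0 ≤ x j} \ {0} → (0 : Fin d → ℝ) ∉ closure B → ν (frontier B) = 0 →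
      Tendsto (fun t : ℝ => t * (ℙ {ω | t⁻¹ • V ω ∈ B}).toReal) atTop (nhds (ν B).toReal))
    (L : Set (Fin d → ℝ)) (hLm : MeasurableSet L) (hLE : L ⊆ {x | ∀ j, 0 ≤ x j} \ {0})
    (hL0 : (0 : Fin d → ℝ) ∉ closure L) (hLf : ν L < ⊤) (hbd : ν (frontier L) = 0)
    (hzero : ν {x : Fin d → ℝ | (∀ j, 0 ≤ x j) ∧ x ≠ 0 ∧ ∃ j, x j = 0} = 0)
    (g : (Fin d → ℝ) → ℝ) (hg : Measurable g) (M : ℝ) (hg0 : ∀ x, 0 ≤ g x) (hgM : ∀ x, g x ≤ M)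
    (hgc : ∀ x : Fin d → ℝ, (∀ j, 0 < x j) → ContinuousAt g x) :
    Tendsto (fun t : ℝ => t * ∫ ω in {ω | t⁻¹ • V ω ∈ L}, g (t⁻¹ • V ω) ∂ℙ) atTop
      (nhds (∫ x in L, g x ∂ν)) := by
  have hVt : ∀ t : ℝ, Measurable fun ω => t⁻¹ • V ω := fun t => by
    exact hV.const_smul t⁻¹
  have hSt : ∀ t : ℝ, MeasurableSet {ω | t⁻¹ • V ω ∈ L} := fun t => hVt t hLm
  have : IsFiniteMeasure (ν.restrict L) := ⟨by simpa using hLf⟩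
  have e1 : ∫ x in L, g x ∂ν = ∫ s in Ioc 0 M, (ν (L ∩ {x | s ≤ g x})).toReal := by
    have hi : Integrable (fun x => g x) (ν.restrict L) := 
      Integrable.of_bound hg.aestronglyMeasurable M (ae_of_all _ fun a => by
        rw [Real.norm_eq_abs, abs_of_nonneg (hg0 _)]; exact hgM _)
    rw [hi.integral_eq_integral_Ioc_meas_le (ae_of_all _ hg0) (ae_of_all _ hgM)]
    congr 1; ext s
    rw [measureReal_def, Measure.restrict_apply (measurableSet_le measurable_const hg), inter_comm]
  have e2 : ∀ t : ℝ, t * ∫ ω in {ω | t⁻¹ • V ω ∈ L}, g (t⁻¹ • V ω) ∂ℙ =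
      ∫ s in Ioc 0 M, t * (ℙ {ω | t⁻¹ • V ω ∈ L ∩ {x | s ≤ g x}}).toReal := by
    intro t
    have hi : Integrable (fun ω => g (t⁻¹ • V ω)) (ℙ.restrict {ω | t⁻¹ • V ω ∈ L}) := 
      Integrable.of_bound (hg.comp (hVt t)).aestronglyMeasurable M (ae_of_all _ fun a => by
        rw [Real.norm_eq_abs, abs_of_nonneg (hg0 _)]; exact hgM _)
    rw [hi.integral_eq_integral_Ioc_meas_le (ae_of_all _ fun _ => hg0 _) (ae_of_all _ fun _ => hgM _),
      ← integral_const_mul]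
    congr 1; ext s
    rw [measureReal_def, Measure.restrict_apply
      (show MeasurableSet {a | s ≤ g (t⁻¹ • V a)} from
        measurableSet_le measurable_const (hg.comp (hVt t))), inter_comm]
    rfl
  simp_rw [e2]
  rw [e1]
  have hLconv := hconv L hLm hLE hL0 hbd
  refine tendsto_integral_filter_of_dominated_convergence (fun _ => (ν L).toReal + 1) ?_ ?_ ?_ ?_
  · filter_upwards [eventually_ge_atTop 0] with t ht
    have : Antitone fun s => t * (ℙ {ω | t⁻¹ • V ω ∈ L ∩ {x | s ≤ g x}}).toReal := by
      intro s s' hs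
      refine mul_le_mul_of_nonneg_left (ENNReal.toReal_mono (measure_ne_top _ _)
        (measure_mono fun ω hω => ⟨hω.1, hs.trans hω.2⟩)) ht
    exact this.measurable.aestronglyMeasurable
  · filter_upwards [eventually_ge_atTop 0, hLconv.eventually (gt_mem_nhds (lt_add_one _))]
      with t ht h1
    refine ae_of_all _ fun s => ?_
    rw [Real.norm_eq_abs, abs_of_nonneg (by positivity)]
    refine le_trans (mul_le_mul_of_nonneg_left (ENNReal.toReal_mono (measure_ne_top _ _)
        (measure_mono fun ω hω => hω.1)) ht) h1.le
  · exact integrable_const _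
  · have hcount : {s : ℝ | 0 < (ν.restrict L) {x | g x = s}}.Countable :=
      Measure.countable_meas_level_set_pos hg
    have : ∀ᵐ s : ℝ, s ∉ {s : ℝ | 0 < (ν.restrict L) {x | g x = s}} := hcount.ae_notMem volume
    filter_upwards [ae_restrict_of_ae this] with s hs
    have hs' : ν ({x | g x = s} ∩ L) = 0 := by
      rw [← Measure.restrict_apply (measurableSet_eq_fun hg measurable_const)]
      simpa using hs
    refine hconv _ (hLm.inter (measurableSet_le measurable_const hg))
      (inter_subset_left.trans hLE) (fun h => hL0 (closure_mono inter_subset_left h)) ?_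
    refine measure_mono_null ?_ (measure_union_null (measure_union_null hbd hzero) hs')
    intro x hx
    have hxc : x ∈ closure L := closure_mono inter_subset_left hx.1
    by_cases hf : x ∈ frontier L
    · exact Or.inl (Or.inl hf)
    have hxi : x ∈ interior L := by
      by_contra hni; exact hf ⟨hxc, hni⟩
    have hxL := interior_subset hxi
    have hE := hLE hxL
    by_cases hz : ∃ j, x j = 0
    · exact Or.inl (Or.inr ⟨hE.1, hE.2, hz⟩)
    push Not at hz
    have hcx := hgc x fun j => lt_of_le_of_ne (hE.1 j) (hz j).symm
    right
    refine ⟨?_, hxL⟩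
    by_contra hne
    rcases lt_or_gt_of_ne hne with h | h
    · have : ∀ᶠ y in nhds x, g y < s := hcx.eventually (gt_mem_nhds h)
      obtain ⟨y, hy1, hy2⟩ := mem_closure_iff_nhds.1 hx.1 _ this
      exact absurd (show g y < s from hy1) (not_lt.2 hy2.2)
    · have : ∀ᶠ y in nhds x, s < g y := hcx.eventually (lt_mem_nhds h)
      apply hx.2
      rw [mem_interior_iff_mem_nhds] at hxi ⊢
      filter_upwards [hxi, this] with y h1 h2 using ⟨h1, h2.le⟩

/-- Cutoff function. -/
noncomputable def mgpRho {d : ℕ} (N : ℝ) (x : Fin d → ℝ) : ℝ :=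
  ∑ j, (max 0 (min 1 (2 - N * x j)) + max 0 (min 1 (x j - N)))

lemma mgpRho_cont {d : ℕ} (N : ℝ) : Continuous (mgpRho (d := d) N) := by
  unfold mgpRho; fun_prop

lemma mgpRho_nonneg {d : ℕ} (N : ℝ) (x : Fin d → ℝ) : 0 ≤ mgpRho N x :=
  Finset.sum_nonneg fun _ _ => add_nonneg (le_max_left _ _) (le_max_left _ _)

lemma mgpRho_le {d : ℕ} (N : ℝ) (x : Fin d → ℝ) : mgpRho N x ≤ 2 * d := by
  have : mgpRho N x ≤ ∑ j : Fin d, (2 : ℝ) := by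
    refine Finset.sum_le_sum fun j _ => ?_
    have h1 : max 0 (min 1 (2 - N * x j)) ≤ 1 := max_le zero_le_one (min_le_left _ _)
    have h2 : max 0 (min 1 (x j - N)) ≤ 1 := max_le zero_le_one (min_le_left _ _)
    linarith
  simpa [mul_comm] using this

lemma mgpRho_ge {d : ℕ} (N : ℝ) (hN : 0 < N) (x : Fin d → ℝ)
    (h : ¬ ∀ j, x j ∈ Icc (1 / N) (N + 1)) : 1 ≤ mgpRho N x := by
  push Not at h
  obtain ⟨j, hj⟩ := h
  have h0 : max 0 (min 1 (2 - N * x j)) + max 0 (min 1 (x j - N)) ≤ mgpRho N x :=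
    Finset.single_le_sum (f := fun j => max 0 (min 1 (2 - N * x j)) + max 0 (min 1 (x j - N)))
      (fun _ _ => add_nonneg (le_max_left _ _) (le_max_left _ _)) (Finset.mem_univ j)
  refine le_trans ?_ h0
  have p1 : 0 ≤ max 0 (min 1 (2 - N * x j)) := le_max_left _ _
  have p2 : 0 ≤ max 0 (min 1 (x j - N)) := le_max_left _ _
  by_cases hl : 1 / N ≤ x j
  · have hu : N + 1 < x j := by
      by_contra hu; exact hj ⟨hl, not_lt.1 hu⟩
    have : 1 ≤ max 0 (min 1 (x j - N)) := le_max_of_le_right (le_min le_rfl (by linarith))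
    linarith
  · have hl' : x j * N < 1 := (lt_div_iff₀ hN).1 (not_le.1 hl)
    have : 1 ≤ max 0 (min 1 (2 - N * x j)) := le_max_of_le_right (le_min le_rfl (by linarith))
    linarith

lemma mgpRho_tendsto {d : ℕ} (x : Fin d → ℝ) (hx : ∀ j, 0 < x j) :
    Tendsto (fun n : ℕ => mgpRho ((n : ℝ) + 1) x) atTop (nhds 0) := by
  have hN : Tendsto (fun n : ℕ => (n : ℝ) + 1) atTop atTop :=
    tendsto_atTop_add_const_right _ _ tendsto_natCast_atTop_atTop
  have : ∀ j, ∀ᶠ n : ℕ in atTop, max 0 (min 1 (2 - ((n : ℝ) + 1) * x j)) +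
      max 0 (min 1 (x j - ((n : ℝ) + 1))) = 0 := by
    intro j
    filter_upwards [hN.eventually_ge_atTop (x j), hN.eventually_ge_atTop (2 / x j)] with n h1 h2
    have h3 := (div_le_iff₀ (hx j)).1 h2
    rw [max_eq_left ((min_le_right _ _).trans (by linarith)),
      max_eq_left ((min_le_right _ _).trans (by linarith)), add_zero]
  refine tendsto_const_nhds.congr' ?_
  filter_upwards [eventually_all.2 this] with n hn
  exact (Finset.sum_eq_zero fun j _ => hn j).symm

lemma mgp_stepB {d : ℕ} {Ω : Type*} [MeasurableSpace Ω] (ℙ : Measure Ω) [IsProbabilityMeasure ℙ]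
    (V : Ω → Fin d → ℝ) (hV : Measurable V) (ν : Measure (Fin d → ℝ))
    (hconv : ∀ B : Set (Fin d → ℝ), MeasurableSet B →
      B ⊆ {x | ∀ j, 0 ≤ x j} \ {0} → (0 : Fin d → ℝ) ∉ closure B → ν (frontier B) = 0 →
      Tendsto (fun t : ℝ => t * (ℙ {ω | t⁻¹ • V ω ∈ B}).toReal) atTop (nhds (ν B).toReal))
    (L : Set (Fin d → ℝ)) (hLm : MeasurableSet L) (hLE : L ⊆ {x | ∀ j, 0 ≤ x j} \ {0})
    (hL0 : (0 : Fin d → ℝ) ∉ closure L) (hLf : ν L < ⊤) (hbd : ν (frontier L) = 0)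
    (hzero : ν {x : Fin d → ℝ | (∀ j, 0 ≤ x j) ∧ x ≠ 0 ∧ ∃ j, x j = 0} = 0)
    (h : BoundedContinuousFunction (Fin d → ℝ) ℝ)
    (φ : Fin d → ℝ → ℝ) (hφm : ∀ j, Measurable (φ j))
    (hφ : ∀ j y, 0 < y → ContinuousAt (φ j) y)
    (W : ℝ → Ω → Fin d → ℝ) (hWm : ∀ t, Measurable (W t))
    (hW : ∀ δ M : ℝ, 0 < δ → ∀ ε > 0, ∀ᶠ t in atTop, ∀ᵐ ω ∂ℙ,
      (∀ j, (t⁻¹ • V ω) j ∈ Icc δ M) → ∀ j, |φ j ((t⁻¹ • V ω) j) - W t ω j| < ε) :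
    Tendsto (fun t : ℝ => t * ∫ ω in {ω | t⁻¹ • V ω ∈ L}, h (W t ω) ∂ℙ) atTop
      (nhds (∫ x in L, h (fun j => φ j (x j)) ∂ν)) := by
  have hVt : ∀ t : ℝ, Measurable fun ω => t⁻¹ • V ω := fun t => by exact hV.const_smul t⁻¹
  have hSt : ∀ t : ℝ, MeasurableSet {ω | t⁻¹ • V ω ∈ L} := fun t => hVt t hLm
  have : IsFiniteMeasure (ν.restrict L) := ⟨by simpa using hLf⟩
  have hΦm : Measurable fun x : Fin d → ℝ => fun j => φ j (x j) :=
    measurable_pi_lambda _ fun j => (hφm j).comp (measurable_pi_apply j)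
  have hLconv := hconv L hLm hLE hL0 hbd
  have hb : ∀ x, |h x| ≤ ‖h‖ := fun x => h.norm_coe_le_norm x
  have iW : ∀ t, IntegrableOn (fun ω => h (W t ω)) {ω | t⁻¹ • V ω ∈ L} ℙ := fun t =>
    Integrable.of_bound (h.continuous.measurable.comp (hWm t)).aestronglyMeasurable ‖h‖
      (ae_of_all _ fun ω => hb _)
  have iΦ : ∀ t : ℝ, IntegrableOn (fun ω => h (fun j => φ j ((t⁻¹ • V ω) j)))
      {ω | t⁻¹ • V ω ∈ L} ℙ := fun t =>
    Integrable.of_bound (h.continuous.measurable.comp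
      (hΦm.comp (hVt t))).aestronglyMeasurable ‖h‖ (ae_of_all _ fun ω => hb _)
  have iν : IntegrableOn (fun x => h (fun j => φ j (x j))) L ν :=
    Integrable.of_bound (h.continuous.measurable.comp hΦm).aestronglyMeasurable ‖h‖
      (ae_of_all _ fun ω => hb _)
  -- limit of the main part
  have hmain : Tendsto (fun t : ℝ => t * ∫ ω in {ω | t⁻¹ • V ω ∈ L},
      h (fun j => φ j ((t⁻¹ • V ω) j)) ∂ℙ) atTop (nhds (∫ x in L, h (fun j => φ j (x j)) ∂ν)) := by
    have key := mgp_stepA ℙ V hV ν hconv L hLm hLE hL0 hLf hbd hzero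
      (fun x => h (fun j => φ j (x j)) + ‖h‖)
      ((h.continuous.measurable.comp hΦm).add_const _) (2 * ‖h‖)
      (fun x => by linarith [(abs_le.1 (hb fun j => φ j (x j))).1])
      (fun x => by linarith [(abs_le.1 (hb fun j => φ j (x j))).2])
      (fun x hx => by
        refine ContinuousAt.add ?_ continuousAt_const
        refine ContinuousAt.comp (f := fun x : Fin d → ℝ => fun j => φ j (x j))
          h.continuous.continuousAt ?_
        exact continuousAt_pi.2 fun j =>
          ContinuousAt.comp (f := fun x : Fin d → ℝ => x j) (hφ j (x j) (hx j))
            (continuous_apply j).continuousAt)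
    have k2 := key.sub (hLconv.mul_const ‖h‖)
    have eν : ∫ x in L, (h (fun j => φ j (x j)) + ‖h‖) ∂ν - (ν L).toReal * ‖h‖ =
        ∫ x in L, h (fun j => φ j (x j)) ∂ν := by
      rw [integral_add iν (integrable_const _)]
      simp [measureReal_def]
    rw [eν] at k2
    refine k2.congr fun t => ?_
    rw [integral_add (iΦ t) (integrable_const _)]
    simp [measureReal_def]
    ring
  -- tail integrals
  have hzae : ∀ᵐ x ∂(ν.restrict L), ∀ j, 0 < x j := by
    rw [ae_restrict_iff' hLm]
    have : ∀ᵐ x ∂ν, x ∉ {x : Fin d → ℝ | (∀ j, 0 ≤ x j) ∧ x ≠ 0 ∧ ∃ j, x j = 0} :=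
      measure_eq_zero_iff_ae_notMem.1 hzero
    filter_upwards [this] with x hx hxL j
    have hE := hLE hxL
    refine lt_of_le_of_ne (hE.1 j) fun h0 => hx ⟨hE.1, hE.2, j, h0.symm⟩
  have hρ0 : Tendsto (fun n : ℕ => ∫ x in L, mgpRho ((n : ℝ) + 1) x ∂ν) atTop (nhds 0) := by
    have := tendsto_integral_of_dominated_convergence (μ := ν.restrict L)
      (F := fun (n : ℕ) x => mgpRho ((n : ℝ) + 1) x) (f := fun _ => 0) (fun _ => 2 * (d : ℝ))
      (fun n => (mgpRho_cont _).aestronglyMeasurable) (integrable_const _)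
      (fun n => ae_of_all _ fun x => by
        rw [Real.norm_eq_abs, abs_of_nonneg (mgpRho_nonneg _ _)]; exact mgpRho_le _ _)
      (hzae.mono fun x hx => mgpRho_tendsto x hx)
    simpa using this
  have hρt : ∀ N : ℝ, Tendsto (fun t : ℝ => t * ∫ ω in {ω | t⁻¹ • V ω ∈ L},
      mgpRho N (t⁻¹ • V ω) ∂ℙ) atTop (nhds (∫ x in L, mgpRho N x ∂ν)) := fun N =>
    mgp_stepA ℙ V hV ν hconv L hLm hLE hL0 hLf hbd hzero (mgpRho N) (mgpRho_cont N).measurable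
      (2 * d) (mgpRho_nonneg N) (mgpRho_le N) fun x _ => (mgpRho_cont N).continuousAt
  have iρ : ∀ N t : ℝ, IntegrableOn (fun ω => mgpRho N (t⁻¹ • V ω)) {ω | t⁻¹ • V ω ∈ L} ℙ :=
    fun N t => Integrable.of_bound
      ((mgpRho_cont N).measurable.comp (hVt t)).aestronglyMeasurable (2 * d)
      (ae_of_all _ fun x => by
        rw [Real.norm_eq_abs, abs_of_nonneg (mgpRho_nonneg _ _)]; exact mgpRho_le _ _)
  -- difference
  have hdiff : Tendsto (fun t : ℝ => t * (∫ ω in {ω | t⁻¹ • V ω ∈ L}, h (W t ω) ∂ℙ) -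
      t * ∫ ω in {ω | t⁻¹ • V ω ∈ L}, h (fun j => φ j ((t⁻¹ • V ω) j)) ∂ℙ) atTop (nhds 0) := by
    rw [Metric.tendsto_nhds]
    intro η hη
    set C := (ν L).toReal + 1 with hC
    have hC0 : 0 < C := by positivity
    have hn0 := norm_nonneg h
    set ε := η / (C + 2 * ‖h‖ + 1) with hε
    have hε0 : 0 < ε := by positivity
    obtain ⟨n, hn⟩ := (hρ0.eventually (gt_mem_nhds hε0)).exists
    set N : ℝ := (n : ℝ) + 1 with hN
    have hN0 : 0 < N := by positivity
    -- uniform continuity of h near the compact image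
    set K : Set (Fin d → ℝ) := Set.pi univ fun _ => Icc (1 / N) (N + 1) with hK
    have hKc : IsCompact K := isCompact_univ_pi fun _ => isCompact_Icc
    have hKi : IsCompact ((fun x : Fin d → ℝ => fun j => φ j (x j)) '' K) := by
      refine hKc.image_of_continuousOn (continuousOn_pi.2 fun j x hx => ?_)
      have hxj : 0 < x j := lt_of_lt_of_le (by positivity) (hx j (mem_univ j)).1
      exact (ContinuousAt.comp (f := fun x : Fin d → ℝ => x j) (hφ j (x j) hxj)
            (continuous_apply j).continuousAt).continuousWithinAt
    have hu := hKi.uniformContinuousAt_of_continuousAt h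
      (fun a _ => h.continuous.continuousAt) (Metric.dist_mem_uniformity hε0)
    obtain ⟨κ, hκ, hκb⟩ := Metric.mem_uniformity_dist.1 hu
    filter_upwards [eventually_gt_atTop 0, hLconv.eventually (gt_mem_nhds (lt_add_one _)),
      (hρt N).eventually (gt_mem_nhds hn), hW (1 / N) (N + 1) (by positivity) κ hκ]
      with t ht hP hR hWt
    have hpt : ∀ᵐ ω ∂(ℙ.restrict {ω | t⁻¹ • V ω ∈ L}),
        ‖h (W t ω) - h (fun j => φ j ((t⁻¹ • V ω) j))‖ ≤
          ε + 2 * ‖h‖ * mgpRho N (t⁻¹ • V ω) := by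
      filter_upwards [ae_restrict_of_ae hWt] with ω hω
      by_cases hin : ∀ j, (t⁻¹ • V ω) j ∈ Icc (1 / N) (N + 1)
      · have h1 := hω hin
        have hd : dist (fun j => φ j ((t⁻¹ • V ω) j)) (W t ω) < κ :=
          (dist_pi_lt_iff hκ).2 fun j => h1 j
        have h2 := hκb hd ⟨t⁻¹ • V ω, fun j _ => hin j, rfl⟩
        have h3 : dist (h fun j => φ j ((t⁻¹ • V ω) j)) (h (W t ω)) < ε := h2
        rw [dist_comm, dist_eq_norm] at h3
        have := mul_nonneg (mul_nonneg zero_le_two hn0) (mgpRho_nonneg N (t⁻¹ • V ω))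
        linarith
      · have h1 := mgpRho_ge N hN0 _ hin
        have h2 : ‖h (W t ω) - h (fun j => φ j ((t⁻¹ • V ω) j))‖ ≤ ‖h‖ + ‖h‖ :=
          (norm_sub_le _ _).trans (add_le_add (hb _) (hb _))
        nlinarith
    have hI := norm_integral_le_of_norm_le
      ((integrable_const ε).add ((iρ N t).const_mul (2 * ‖h‖))) hpt
    rw [integral_sub (iW t) (iΦ t), integral_add' (integrable_const ε)
      ((iρ N t).const_mul (2 * ‖h‖)), integral_const_mul] at hI
    simp only [integral_const, measureReal_restrict_apply_univ, smul_eq_mul] at hI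
    rw [dist_zero_right, ← mul_sub, norm_mul, Real.norm_eq_abs t, abs_of_pos ht]
    rw [measureReal_def] at hI
    have hI2 := mul_le_mul_of_nonneg_left hI ht.le
    have hfin : ε * (C + 2 * ‖h‖ + 1) = η := by
      rw [hε]; field_simp
    have p1 := mul_lt_mul_of_pos_left hP hε0
    have p2 := mul_le_mul_of_nonneg_left hR.le hn0
    nlinarith
  have := hdiff.add hmain
  simpa using this


/-- Proposition 1, consequence along the threshold curve: with `σ_j(u) = a_j(1/(1 - F_j(u)))`,
the conditional law of `((X_j - b_j(t))/σ_j(b_j(t)))_j` given `X ≰ b(t)` converges weakly to the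
law of `((Y_j^{ξ_j} - 1)/ξ_j)_j` where `Y` has law `ν(· ∩ 𝕃₁)/ν(𝕃₁)`. -/
theorem mgp_weak_convergence_threshold_curve
    {d : ℕ} {Ω : Type*} [MeasurableSpace Ω] (ℙ : Measure Ω) [IsProbabilityMeasure ℙ]
    (X : Ω → Fin d → ℝ) (hX : Measurable X)
    (F : Fin d → ℝ → ℝ)
    (hFdef : ∀ j x, F j x = (ℙ {ω | X ω j ≤ x}).toReal)
    (hFcont : ∀ j, Continuous (F j))
    (V : Ω → Fin d → ℝ) (hVdef : ∀ ω j, V ω j = 1 / (1 - F j (X ω j)))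
    (ν : Measure (Fin d → ℝ))
    (hfin : ∀ B : Set (Fin d → ℝ), MeasurableSet B →
      B ⊆ {x | ∀ j, 0 ≤ x j} \ {0} → (0 : Fin d → ℝ) ∉ closure B → ν B < ⊤)
    (hconv : ∀ B : Set (Fin d → ℝ), MeasurableSet B →
      B ⊆ {x | ∀ j, 0 ≤ x j} \ {0} → (0 : Fin d → ℝ) ∉ closure B → ν (frontier B) = 0 →
      Tendsto (fun t : ℝ => t * (ℙ {ω | t⁻¹ • V ω ∈ B}).toReal) atTop (nhds (ν B).toReal))
    (L1 : Set (Fin d → ℝ)) (hL1 : L1 = {x | (∀ j, 0 ≤ x j) ∧ ∃ j, 1 < x j})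
    (hpos : 0 < ν L1) (hbd : ν (frontier L1) = 0)
    (hzero : ν {x : Fin d → ℝ | (∀ j, 0 ≤ x j) ∧ x ≠ 0 ∧ ∃ j, x j = 0} = 0)
    (ξ : Fin d → ℝ) (a : Fin d → ℝ → ℝ) (ha : ∀ j, ∀ t : ℝ, 1 < t → 0 < a j t)
    (b : Fin d → ℝ → ℝ) (hb : ∀ j t, b j t = sInf {x : ℝ | 1 - 1 / t ≤ F j x})
    (hmarg : ∀ j, ∀ y : ℝ, 0 < y →
      Tendsto (fun t : ℝ => (b j (t * y) - b j t) / a j t) atTop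
        (nhds (if ξ j = 0 then Real.log y else (y ^ ξ j - 1) / ξ j)))
    -- the scaling function σ_j(u) = a_j(1/(1 - F_j(u))) for u with F_j(u) < 1
    (σ : Fin d → ℝ → ℝ)
    (hσ : ∀ j, ∀ u : ℝ, F j u < 1 → σ j u = a j (1 / (1 - F j u))) :
    ∀ h : BoundedContinuousFunction (Fin d → ℝ) ℝ,
      Tendsto (fun t : ℝ =>
          (∫ ω in {ω | ∃ j, b j t < X ω j},
              h (fun j => (X ω j - b j t) / σ j (b j t)) ∂ℙ) /
            (ℙ {ω | ∃ j, b j t < X ω j}).toReal)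
        atTop
        (nhds ((∫ x in L1,
            h (fun j => if ξ j = 0 then Real.log (x j) else (x j ^ ξ j - 1) / ξ j) ∂ν) /
          (ν L1).toReal)) := by
  intro h
  set φ : Fin d → ℝ → ℝ := fun j y => if ξ j = 0 then Real.log y else (y ^ ξ j - 1) / ξ j with hφdef
  have hXj : ∀ j, Measurable fun ω => X ω j := fun j => (measurable_pi_apply j).comp hX
  have hprob : ∀ j, IsProbabilityMeasure (ℙ.map fun ω => X ω j) := fun j =>
    Measure.isProbabilityMeasure_map (hXj j).aemeasurable
  have hcdf : ∀ j, F j = ProbabilityTheory.cdf (ℙ.map fun ω => X ω j) := by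
    intro j; ext x
    rw [hFdef, ProbabilityTheory.cdf_eq_real, measureReal_def,
      Measure.map_apply (hXj j) measurableSet_Iic]
    rfl
  have hcc : ∀ j, Continuous (ProbabilityTheory.cdf (ℙ.map fun ω => X ω j)) := fun j => by
    rw [← hcdf j]; exact hFcont j
  have hmono : ∀ j, Monotone (F j) := fun j => by
    rw [hcdf j]; exact ProbabilityTheory.monotone_cdf _
  have hgood : ∀ᵐ ω ∂ℙ, ∀ j, 0 < F j (X ω j) ∧ F j (X ω j) < 1 ∧
      ∀ y < X ω j, F j y < F j (X ω j) := by
    refine ae_all_iff.2 fun j => ?_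
    have := ae_of_ae_map (hXj j).aemeasurable (mgp_ae_good _ (hcc j))
    rw [← hcdf j] at this
    exact this
  have hq : ∀ j t, 1 < t → IsLeast {x | 1 - 1 / t ≤ F j x} (b j t) ∧ F j (b j t) = 1 - 1 / t := by
    intro j t ht
    have h1 : 1 / t < 1 := by rw [div_lt_one (by linarith)]; exact ht
    have h2 : 0 < 1 / t := by positivity
    have := mgp_quantile _ (hcc j) (1 - 1 / t) (by linarith) (by linarith)
    rw [← hcdf j, ← hb] at this
    exact this
  have hσb : ∀ j t, 1 < t → σ j (b j t) = a j t := by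
    intro j t ht
    have h2 : 0 < 1 / t := by positivity
    have e := (hq j t ht).2
    rw [hσ j _ (by rw [e]; linarith), e]
    congr 1
    rw [sub_sub_cancel, one_div_one_div]
  have hbmono : ∀ j s t, 1 < s → s ≤ t → b j s ≤ b j t := by
    intro j s t hs hst
    refine (hq j s hs).1.2 ?_
    have := one_div_le_one_div_of_le (by linarith) hst
    show 1 - 1 / s ≤ F j (b j t)
    rw [(hq j t (by linarith)).2]; linarith
  have hVm : Measurable V := by
    refine measurable_pi_lambda _ fun j => ?_
    simp_rw [hVdef]
    exact measurable_const.div (measurable_const.sub ((hFcont j).measurable.comp (hXj j)))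
  have hL1m : MeasurableSet L1 := by
    rw [hL1]
    refine MeasurableSet.inter (s₁ := {x : Fin d → ℝ | ∀ j, 0 ≤ x j})
      (s₂ := {x : Fin d → ℝ | ∃ j, 1 < x j}) ?_ ?_
    · rw [ofPred_forall]
      exact MeasurableSet.iInter fun j => measurableSet_le measurable_const (measurable_pi_apply j)
    · rw [ofPred_exists]
      exact MeasurableSet.iUnion fun j => measurableSet_lt measurable_const (measurable_pi_apply j)
  have hL1E : L1 ⊆ {x | ∀ j, 0 ≤ x j} \ {0} := by
    rw [hL1]
    rintro x ⟨hx, j, hj⟩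
    refine ⟨hx, fun h0 => ?_⟩
    rw [mem_singleton_iff.1 h0] at hj
    simp at hj
    linarith
  have hL10 : (0 : Fin d → ℝ) ∉ closure L1 := by
    have hcl : IsClosed {x : Fin d → ℝ | ∃ j, 1 ≤ x j} := by
      rw [ofPred_exists]
      exact isClosed_iUnion_of_finite fun j => isClosed_le continuous_const (continuous_apply j)
    have hsub : L1 ⊆ {x : Fin d → ℝ | ∃ j, 1 ≤ x j} := by
      rw [hL1]; rintro x ⟨_, j, hj⟩; exact ⟨j, hj.le⟩
    intro h0
    obtain ⟨j, hj⟩ := closure_minimal hsub hcl h0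
    simp at hj
    linarith
  have hL1f := hfin L1 hL1m hL1E hL10
  have hVpos : ∀ ω, (∀ j, 0 < F j (X ω j) ∧ F j (X ω j) < 1 ∧
      ∀ y < X ω j, F j y < F j (X ω j)) → ∀ j, 0 < V ω j ∧ 1 - 1 / V ω j = F j (X ω j) := by
    intro ω hω j
    have := (hω j).2.1
    rw [hVdef]
    refine ⟨by apply div_pos <;> linarith, by rw [one_div_one_div]; ring⟩
  have hiff : ∀ t, 1 < t → ∀ ω, (∀ j, 0 < F j (X ω j) ∧ F j (X ω j) < 1 ∧
      ∀ y < X ω j, F j y < F j (X ω j)) → ((∃ j, b j t < X ω j) ↔ t⁻¹ • V ω ∈ L1) := by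
    intro t ht ω hω
    have ht0 : 0 < t := by linarith
    have hnn : ∀ j, 0 ≤ (t⁻¹ • V ω) j := fun j =>
      mul_nonneg (inv_nonneg.2 ht0.le) (hVpos ω hω j).1.le
    have hj : ∀ j, b j t < X ω j ↔ 1 < (t⁻¹ • V ω) j := by
      intro j
      obtain ⟨v0, v1⟩ := hVpos ω hω j
      have e1 : 1 < (t⁻¹ • V ω) j ↔ t < V ω j := by
        show 1 < t⁻¹ * V ω j ↔ _
        rw [← div_eq_inv_mul, one_lt_div ht0]
      have e2 : t < V ω j ↔ F j (b j t) < F j (X ω j) := by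
        rw [← v1, (hq j t ht).2, sub_lt_sub_iff_left, one_div_lt_one_div v0 ht0]
      rw [e1, e2]
      exact ⟨fun hlt => (hω j).2.2 _ hlt, fun hlt => (hmono j).reflect_lt hlt⟩
    rw [hL1]
    simp only [hj]
    exact ⟨fun hh => ⟨hnn, hh⟩, fun hh => hh.2⟩
  have hWeq : ∀ t, 1 < t → ∀ ω, (∀ j, 0 < F j (X ω j) ∧ F j (X ω j) < 1 ∧
      ∀ y < X ω j, F j y < F j (X ω j)) → ∀ j,
      (X ω j - b j t) / σ j (b j t) = (b j (t * (t⁻¹ • V ω) j) - b j t) / a j t := by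
    intro t ht ω hω j
    have ht0 : t ≠ 0 := by linarith
    have e : t * (t⁻¹ • V ω) j = V ω j := by
      show t * (t⁻¹ * V ω j) = V ω j
      rw [mul_inv_cancel_left₀ ht0]
    have e2 : b j (V ω j) = X ω j := by
      rw [hb, (hVpos ω hω j).2]
      refine IsLeast.csInf_eq ⟨le_refl (F j (X ω j)), fun y hy => ?_⟩
      by_contra hlt
      exact absurd hy (not_le.2 ((hω j).2.2 y (not_le.1 hlt)))
    rw [hσb j t ht, e, e2]
  have hφc : ∀ j y, 0 < y → ContinuousAt (φ j) y := by
    intro j y hy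
    by_cases h0 : ξ j = 0
    · simp only [hφdef, h0, if_true]
      exact Real.continuousAt_log hy.ne'
    · simp only [hφdef, h0, if_false]
      exact ((Real.continuousAt_rpow_const _ _ (Or.inl hy.ne')).sub continuousAt_const).div_const _
  have hφm : ∀ j, Measurable (φ j) := by
    intro j
    by_cases h0 : ξ j = 0
    · simp only [hφdef, h0, if_true]
      exact Real.measurable_log
    · simp only [hφdef, h0, if_false]
      fun_prop
  have hunif : ∀ j (δ M : ℝ), 0 < δ → TendstoUniformlyOn
      (fun t y => (b j (t * y) - b j t) / a j t) (φ j) atTop (Icc δ M) := by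
    intro j δ M hδ
    refine mgp_unif _ (φ j) (hφc j) ?_ (hmarg j) δ M hδ
    intro δ hδ
    filter_upwards [eventually_gt_atTop 1, eventually_gt_atTop (1 / δ)] with t h1 h2
    intro y hy z hz hyz
    have h3 : 1 < t * δ := (div_lt_iff₀ hδ).1 h2
    have h4 : t * δ ≤ t * y := mul_le_mul_of_nonneg_left hy (by linarith)
    have h5 : t * y ≤ t * z := mul_le_mul_of_nonneg_left hyz (by linarith)
    refine div_le_div_of_nonneg_right ?_ (ha j t h1).le
    linarith [hbmono j (t * y) (t * z) (by linarith) h5]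
  have key := mgp_stepB ℙ V hVm ν hconv L1 hL1m hL1E hL10 hL1f hbd hzero h φ hφm hφc
    (fun t ω j => (X ω j - b j t) / σ j (b j t))
    (fun t => measurable_pi_lambda _ fun j => ((hXj j).sub_const _).div_const _)
    (by
      intro δ M hδ ε hε
      have hall : ∀ᶠ t in atTop, ∀ j, ∀ y ∈ Icc δ M,
          dist (φ j y) ((b j (t * y) - b j t) / a j t) < ε :=
        eventually_all.2 fun j => Metric.tendstoUniformlyOn_iff.1 (hunif j δ M hδ) ε hε
      filter_upwards [hall, eventually_gt_atTop 1] with t h1 h2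
      filter_upwards [hgood] with ω hω hin j
      rw [hWeq t h2 ω hω j]
      exact h1 j _ (hin j))
  have hLconv := hconv L1 hL1m hL1E hL10 hbd
  have hne : (ν L1).toReal ≠ 0 := (ENNReal.toReal_pos hpos.ne' hL1f.ne).ne'
  refine (key.div hLconv hne).congr' ?_
  filter_upwards [eventually_gt_atTop 1] with t ht
  have hset : ({ω | ∃ j, b j t < X ω j} : Set Ω) =ᵐ[ℙ] {ω | t⁻¹ • V ω ∈ L1} := by
    filter_upwards [hgood] with ω hω
    exact propext (hiff t ht ω hω)
  show (t * _) / (t * _) = _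
  rw [mul_div_mul_left _ _ (by linarith), setIntegral_congr_set hset, measure_congr hset]
end

section
/- Let Φ be a probability measure on the unit simplex Δ_{d-1}, and define the measure ν on Borel sets B ⊆ [0,∞)^d \ {0} by ν(B) = d·∫_{Δ_{d-1}} ∫_0^∞ 1_B(y·w) y^{-2} dy dΦ(w). Let Θ have law Φ and let Y be a unit-Pareto random variable independent of Θ. Then 0 < ν(𝕃₁) < ∞ and, for every Borel set B ⊆ [0,∞)^d, ν(B ∩ 𝕃₁)/ν(𝕃₁) = P(Y·Θ ∈ B | Y·Θ ∈ 𝕃₁). -/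
open MeasureTheory Filter Set
open scoped ENNReal

lemma pareto_lintegral (c : ℝ) (hc : 1 ≤ c) :
    ∫⁻ y in Ioi c, (1 : ℝ≥0∞) / ENNReal.ofReal (y ^ 2) = ENNReal.ofReal (1 / c) := by
  have hc0 : 0 < c := by linarith
  have h1 : ∫⁻ y in Ioi c, (1 : ℝ≥0∞) / ENNReal.ofReal (y ^ 2)
      = ∫⁻ y in Ioi c, ENNReal.ofReal (y ^ (-2 : ℝ)) := by
    refine setLIntegral_congr_fun measurableSet_Ioi (fun y hy => ?_)
    have hy0 : 0 < y := hc0.trans hy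
    show (1 : ℝ≥0∞) / ENNReal.ofReal (y ^ 2) = ENNReal.ofReal (y ^ (-2 : ℝ))
    rw [Real.rpow_neg hy0.le, one_div, ENNReal.ofReal_inv_of_pos (by positivity)]
    norm_num
  rw [h1, ← ofReal_integral_eq_lintegral_ofReal
    (integrableOn_Ioi_rpow_of_lt (by norm_num) hc0), integral_Ioi_rpow_of_lt (by norm_num) hc0]
  · congr 1
    norm_num
    rw [Real.rpow_neg_one]
  · filter_upwards [ae_restrict_mem measurableSet_Ioi] with y hy
    exact Real.rpow_nonneg (hc0.trans hy).le _

lemma pareto_law {Ω : Type*} [MeasurableSpace Ω] (ℙ : Measure Ω) [IsProbabilityMeasure ℙ]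
    (Y : Ω → ℝ) (hY : Measurable Y)
    (hPareto : ∀ y : ℝ, 1 ≤ y → (ℙ {ω | y < Y ω}).toReal = 1 / y) :
    Measure.map Y ℙ = (volume.restrict (Ioi (1 : ℝ))).withDensity
      (fun y => (1 : ℝ≥0∞) / ENNReal.ofReal (y ^ 2)) := by
  set μ := (volume.restrict (Ioi (1 : ℝ))).withDensity
      (fun y => (1 : ℝ≥0∞) / ENNReal.ofReal (y ^ 2)) with hμ
  haveI : IsProbabilityMeasure μ := ⟨by
    rw [hμ, withDensity_apply _ MeasurableSet.univ, Measure.restrict_univ,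
      pareto_lintegral 1 le_rfl]; simp⟩
  haveI : IsProbabilityMeasure (Measure.map Y ℙ) :=
    Measure.isProbabilityMeasure_map hY.aemeasurable
  have hP : ∀ y : ℝ, 1 ≤ y → Measure.map Y ℙ (Ioi y) = ENNReal.ofReal (1 / y) := by
    intro y hy
    rw [Measure.map_apply hY measurableSet_Ioi, ← hPareto y hy,
      ENNReal.ofReal_toReal (measure_ne_top _ _)]
    rfl
  have hM : ∀ y : ℝ, 1 ≤ y → μ (Ioi y) = ENNReal.ofReal (1 / y) := by
    intro y hy
    rw [hμ, withDensity_apply _ measurableSet_Ioi, Measure.restrict_restrict measurableSet_Ioi,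
      inter_eq_left.2 (Ioi_subset_Ioi hy), pareto_lintegral y hy]
  have key : ∀ y : ℝ, Measure.map Y ℙ (Ioi y) = μ (Ioi y) := by
    intro y
    rcases le_total 1 y with hy | hy
    · rw [hP y hy, hM y hy]
    · have a : Measure.map Y ℙ (Ioi y) = 1 := le_antisymm prob_le_one (by
        calc (1 : ℝ≥0∞) = Measure.map Y ℙ (Ioi 1) := by rw [hP 1 le_rfl]; simp
          _ ≤ _ := measure_mono (Ioi_subset_Ioi hy))
      have b : μ (Ioi y) = 1 := le_antisymm prob_le_one (by
        calc (1 : ℝ≥0∞) = μ (Ioi 1) := by rw [hM 1 le_rfl]; simp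
          _ ≤ _ := measure_mono (Ioi_subset_Ioi hy))
      rw [a, b]
  refine Measure.ext_of_Iic _ _ (fun a => ?_)
  rw [← compl_Ioi, prob_compl_eq_one_sub measurableSet_Ioi,
    prob_compl_eq_one_sub measurableSet_Ioi, key]

/-- With `ν(B) = d·∫_{Δ} ∫_0^∞ 1_B(y·w) y⁻² dy dΦ(w)`, `Θ ~ Φ` on the unit simplex and `Y`
unit-Pareto independent of `Θ`, one has `0 < ν(𝕃₁) < ∞` and
`ν(B ∩ 𝕃₁)/ν(𝕃₁) = P(Y·Θ ∈ B | Y·Θ ∈ 𝕃₁)` for every Borel `B ⊆ [0,∞)^d`. -/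
theorem exponent_measure_ratio_eq_conditional_prob
    {d : ℕ} {Ω : Type*} [MeasurableSpace Ω] (ℙ : Measure Ω) [IsProbabilityMeasure ℙ]
    (Φ : Measure (Fin d → ℝ)) [IsProbabilityMeasure Φ]
    (Δ : Set (Fin d → ℝ))
    (hΔ : Δ = {x | (∀ j, 0 ≤ x j ∧ x j ≤ 1) ∧ ∑ j, |x j| = 1})
    (hΦ : Φ Δᶜ = 0)
    (Θ : Ω → Fin d → ℝ) (hΘ : Measurable Θ) (hlaw : Measure.map Θ ℙ = Φ)
    (Y : Ω → ℝ) (hY : Measurable Y)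
    (hPareto : ∀ y : ℝ, 1 ≤ y → (ℙ {ω | y < Y ω}).toReal = 1 / y)
    (hindep : ProbabilityTheory.IndepFun Y Θ ℙ)
    (L1 : Set (Fin d → ℝ)) (hL1 : L1 = {x | (∀ j, 0 ≤ x j) ∧ ∃ j, 1 < x j})
    (ν : Set (Fin d → ℝ) → ℝ≥0∞)
    (hν : ∀ B : Set (Fin d → ℝ),
      ν B = d * ∫⁻ w in Δ,
        (∫⁻ y in Ioi (0 : ℝ),
          B.indicator (fun _ => (1 : ℝ≥0∞)) (y • w) / ENNReal.ofReal (y ^ 2)) ∂Φ) :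
    0 < ν L1 ∧ ν L1 < ⊤ ∧
      ∀ B : Set (Fin d → ℝ), MeasurableSet B → B ⊆ {x | ∀ j, 0 ≤ x j} →
        ν (B ∩ L1) / ν L1
          = ℙ {ω | Y ω • Θ ω ∈ B ∩ L1} / ℙ {ω | Y ω • Θ ω ∈ L1} := by
  have hd : 0 < d := by
    rcases Nat.eq_zero_or_pos d with h | h
    · subst h
      have : Δ = ∅ := by rw [hΔ]; ext x; simp
      rw [this] at hΦ
      simp at hΦ
    · exact h
  have hΔm : MeasurableSet Δ := by
    rw [hΔ]
    have : {x : Fin d → ℝ | (∀ j, 0 ≤ x j ∧ x j ≤ 1) ∧ ∑ j, |x j| = 1}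
        = (⋂ j, ({x | 0 ≤ x j} ∩ {x | x j ≤ 1})) ∩ {x | ∑ j, |x j| = 1} := by
      ext x; simp
    rw [this]
    refine IsClosed.measurableSet (IsClosed.inter (isClosed_iInter fun j => IsClosed.inter ?_ ?_) ?_)
    · exact isClosed_le (by fun_prop) (by fun_prop)
    · exact isClosed_le (by fun_prop) (by fun_prop)
    · exact isClosed_eq (by fun_prop) (by fun_prop)
  have hL1m : MeasurableSet L1 := by
    rw [hL1]
    have : {x : Fin d → ℝ | (∀ j, 0 ≤ x j) ∧ ∃ j, 1 < x j}
        = (⋂ j, {x | 0 ≤ x j}) ∩ ⋃ j, {x | 1 < x j} := by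
      ext x; simp
    rw [this]
    refine MeasurableSet.inter (MeasurableSet.iInter fun j => ?_) (MeasurableSet.iUnion fun j => ?_)
    · exact measurableSet_le (by fun_prop) (by fun_prop)
    · exact measurableSet_lt (by fun_prop) (by fun_prop)
  have hlawY := pareto_law ℙ Y hY hPareto
  set μ := (volume.restrict (Ioi (1 : ℝ))).withDensity
      (fun y => (1 : ℝ≥0∞) / ENNReal.ofReal (y ^ 2)) with hμ
  haveI : IsProbabilityMeasure μ := by
    rw [← hlawY]; exact Measure.isProbabilityMeasure_map hY.aemeasurable
  have hΦr : Φ.restrict Δ = Φ := Measure.restrict_eq_self_of_ae_mem (by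
    rw [ae_iff]; exact hΦ)
  have hjoint : Measure.map (fun ω => (Θ ω, Y ω)) ℙ = Φ.prod μ := by
    rw [(ProbabilityTheory.indepFun_iff_map_prod_eq_prod_map_map hΘ.aemeasurable
      hY.aemeasurable).1 hindep.symm, hlaw, hlawY]
  have main : ∀ C : Set (Fin d → ℝ), MeasurableSet C → C ⊆ L1 →
      ν C = d * ℙ {ω | Y ω • Θ ω ∈ C} := by
    intro C hC hCL
    have hsm : Measurable (fun p : (Fin d → ℝ) × ℝ => p.2 • p.1) := by fun_prop
    have e1 : ℙ {ω | Y ω • Θ ω ∈ C} = ∫⁻ w, μ {y | y • w ∈ C} ∂Φ := by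
      have : {ω | Y ω • Θ ω ∈ C} = (fun ω => (Θ ω, Y ω)) ⁻¹'
          ((fun p : (Fin d → ℝ) × ℝ => p.2 • p.1) ⁻¹' C) := rfl
      rw [this, ← Measure.map_apply (hΘ.prodMk hY) (hsm hC), hjoint,
        Measure.prod_apply (hsm hC)]
      rfl
    rw [hν C, e1]
    congr 1
    conv_rhs => rw [← hΦr]
    refine setLIntegral_congr_fun hΔm (fun w hw => ?_)
    have hSm : MeasurableSet {y : ℝ | y • w ∈ C} := by
      have : Measurable (fun y : ℝ => y • w) := by fun_prop
      exact this hC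
    have hsub : ∀ y : ℝ, 0 < y → y • w ∈ C → 1 < y := by
      intro y hy0 hy
      have h := hCL hy
      rw [hL1] at h
      obtain ⟨-, j, hj⟩ := h
      rw [hΔ] at hw
      have h2 := (hw.1 j).2
      simp only [Pi.smul_apply, smul_eq_mul] at hj
      nlinarith
    show ∫⁻ y in Ioi (0 : ℝ), C.indicator (fun _ => (1 : ℝ≥0∞)) (y • w) / ENNReal.ofReal (y ^ 2)
      = μ {y | y • w ∈ C}
    rw [hμ, withDensity_apply _ hSm, Measure.restrict_restrict hSm,
      ← lintegral_indicator measurableSet_Ioi,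
      ← lintegral_indicator (hSm.inter measurableSet_Ioi)]
    congr 1
    ext y
    by_cases h0 : 0 < y
    · by_cases hyC : y • w ∈ C
      · have h1 := hsub y h0 hyC
        simp [indicator, h0, hyC, h1]
      · simp [indicator, hyC]
    · have h1 : ¬ 1 < y := fun h => h0 (by linarith)
      simp [indicator, h0, h1]
  have hpos : 0 < ℙ {ω | Y ω • Θ ω ∈ L1} := by
    have hd1 : (1 : ℝ) ≤ d := by exact_mod_cast hd
    have h1 : ℙ {ω | (d : ℝ) < Y ω} ≠ 0 := by
      intro h
      have h2 := hPareto d hd1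
      rw [h] at h2
      have : (0 : ℝ) < 1 / d := by positivity
      rw [← h2] at this
      simp at this
    refine lt_of_lt_of_le (pos_iff_ne_zero.2 h1) (measure_mono_ae ?_)
    have h3 : ∀ᵐ ω ∂ℙ, Θ ω ∈ Δ := by
      have : ℙ (Θ ⁻¹' Δᶜ) = 0 := by
        rw [← Measure.map_apply hΘ hΔm.compl, hlaw, hΦ]
      rw [ae_iff]; exact this
    filter_upwards [h3] with ω hω hYω
    have hYω' : (d : ℝ) < Y ω := hYω
    show Y ω • Θ ω ∈ L1
    rw [hΔ] at hω
    obtain ⟨ha, hb⟩ := hω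
    rw [hL1]
    refine ⟨fun j => mul_nonneg (by linarith) (ha j).1, ?_⟩
    by_contra! hcon
    have hs : ∑ j, Y ω * |Θ ω j| ≤ ∑ j : Fin d, (1 : ℝ) :=
      Finset.sum_le_sum fun j _ => by
        rw [abs_of_nonneg (ha j).1]; exact hcon j
    rw [← Finset.mul_sum, hb] at hs
    simp at hs
    linarith
  have hd0 : (d : ℝ≥0∞) ≠ 0 := by exact_mod_cast hd.ne'
  have hdt : (d : ℝ≥0∞) ≠ ⊤ := ENNReal.natCast_ne_top d
  refine ⟨?_, ?_, ?_⟩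
  · rw [main L1 hL1m subset_rfl]
    exact ENNReal.mul_pos hd0 hpos.ne'
  · rw [main L1 hL1m subset_rfl]
    exact ENNReal.mul_lt_top hdt.lt_top (measure_lt_top _ _)
  · intro B hB _
    rw [main L1 hL1m subset_rfl, main _ (hB.inter hL1m) inter_subset_right]
    exact ENNReal.mul_div_mul_left _ _ hd0 hdt
end

section
/- (Change of norm for angular measures.) Let ‖·‖ be a norm on ℝ^d, let Δ̃ = {x ∈ [0,∞)^d : ‖x‖ = 1}, let Φ be a probability measure on the unit simplex Δ_{d-1}, and let Ψ be a finite Borel measure on Δ̃. Assume that for every bounded Borel function f : [0,∞)^d → ℝ vanishing on a neighborhood of 0, d · ∫_{Δ_{d-1}} ∫_0^∞ f(r·w) r^{-2} dr dΦ(w) = ∫_{Δ̃} ∫_0^∞ f(r·w̃) r^{-2} dr dΨ(w̃). Then for every bounded Borel function g : Δ̃ → ℝ, ∫_{Δ̃} g dΨ = d · ∫_{Δ_{d-1}} g(w/‖w‖) · ‖w‖ dΦ(w); in particular Ψ(Δ̃) = d · ∫_{Δ_{d-1}} ‖w‖ dΦ(w), and the normalized measure Φ̃ = Ψ/Ψ(Δ̃)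 satisfies ∫ g dΦ̃ = ( ∫_{Δ_{d-1}} g(w/‖w‖) ‖w‖ dΦ(w) ) / ( ∫_{Δ_{d-1}} ‖w‖ dΦ(w) ). -/
open MeasureTheory Filter Set
open scoped ENNReal

/-- Change of norm for angular measures: if the angular measure `Φ` (w.r.t. the `L¹`-norm, on the
unit simplex `Δ`) and the finite measure `Ψ` on the unit sphere `Δ̃` of an arbitrary norm `n`
give the same polar integrals `∫∫ f(r·w) r⁻² dr` (for bounded Borel `f` vanishing near `0`, with
the factor `d` on the simplex side), then for every bounded Borel `g`,
`∫_{Δ̃} g dΨ = d·∫_Δ g(w/n(w))·n(w) dΦ`; in particular `Ψ(Δ̃) = d·∫_Δ n(w) dΦ` and the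
normalized measure `Φ̃ = Ψ/Ψ(Δ̃)` satisfies
`∫ g dΦ̃ = (∫_Δ g(w/n(w)) n(w) dΦ) / (∫_Δ n(w) dΦ)`. -/
theorem angular_measure_change_of_norm
    {d : ℕ}
    (n : (Fin d → ℝ) → ℝ)
    (hn_nonneg : ∀ x, 0 ≤ n x)
    (hn_eq_zero : ∀ x, n x = 0 ↔ x = 0)
    (hn_smul : ∀ (a : ℝ) (x : Fin d → ℝ), n (a • x) = |a| * n x)
    (hn_add : ∀ x y, n (x + y) ≤ n x + n y)
    (Δ : Set (Fin d → ℝ))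
    (hΔ : Δ = {x | (∀ j, 0 ≤ x j ∧ x j ≤ 1) ∧ ∑ j, |x j| = 1})
    (Δt : Set (Fin d → ℝ)) (hΔt : Δt = {x | (∀ j, 0 ≤ x j) ∧ n x = 1})
    (Φ : Measure (Fin d → ℝ)) [IsProbabilityMeasure Φ] (hΦ : Φ Δᶜ = 0)
    (Ψ : Measure (Fin d → ℝ)) [IsFiniteMeasure Ψ] (hΨ : Ψ Δtᶜ = 0)
    (hdual : ∀ f : (Fin d → ℝ) → ℝ, Measurable f → (∃ C, ∀ x, |f x| ≤ C) →
      (∃ s ∈ nhds (0 : Fin d → ℝ), ∀ x ∈ s, f x = 0) →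
      d * ∫ w in Δ, (∫ r in Ioi (0 : ℝ), f (r • w) / r ^ 2) ∂Φ
        = ∫ w in Δt, (∫ r in Ioi (0 : ℝ), f (r • w) / r ^ 2) ∂Ψ) :
    ∀ g : (Fin d → ℝ) → ℝ, Measurable g → (∃ C, ∀ x, |g x| ≤ C) →
      (∫ w in Δt, g w ∂Ψ = d * ∫ w in Δ, g ((n w)⁻¹ • w) * n w ∂Φ) ∧
      ((Ψ Δt).toReal = d * ∫ w in Δ, n w ∂Φ) ∧
      (∫ w in Δt, g w ∂((Ψ Δt)⁻¹ • Ψ)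
        = (∫ w in Δ, g ((n w)⁻¹ • w) * n w ∂Φ) / ∫ w in Δ, n w ∂Φ) := by
  have hcvx : ConvexOn ℝ univ n := by
    refine ⟨convex_univ, fun x _ y _ a b ha hb _ => ?_⟩
    refine (hn_add _ _).trans ?_
    rw [hn_smul, hn_smul, abs_of_nonneg ha, abs_of_nonneg hb]
    simp
  have hcont : Continuous n := by
    rw [← continuousOn_univ]
    exact hcvx.continuousOn isOpen_univ
  have hmeas : Measurable n := hcont.measurable
  have hn0 : n 0 = 0 := (hn_eq_zero 0).2 rfl
  have hΔm : MeasurableSet Δ := by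
    have : IsClosed Δ := by
      rw [hΔ, ofPred_and, ofPred_forall]
      refine IsClosed.inter (isClosed_iInter fun j => ?_) (isClosed_eq (by fun_prop) (by fun_prop))
      rw [ofPred_and]
      refine IsClosed.inter ?_ ?_
      · exact isClosed_le (by fun_prop) (by fun_prop)
      · exact isClosed_le (by fun_prop) (by fun_prop)
    exact this.measurableSet
  have hΔtm : MeasurableSet Δt := by
    have : IsClosed Δt := by
      rw [hΔt, ofPred_and, ofPred_forall]
      refine IsClosed.inter (isClosed_iInter fun j => ?_) (isClosed_eq hcont (by fun_prop))
      exact isClosed_le (by fun_prop) (by fun_prop)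
    exact this.measurableSet
  have hd : (d : ℝ) ≠ 0 := by
    intro h
    have h0 : d = 0 := by exact_mod_cast h
    subst h0
    have : Δ = ∅ := by rw [hΔ]; simp
    rw [this] at hΦ
    simp at hΦ
  -- the radial integral
  have hrad : ∀ (g : (Fin d → ℝ) → ℝ) (w : Fin d → ℝ), 0 < n w →
      ∫ r in Ioi (0 : ℝ), ({x | 1 < n x}.indicator (fun x => g ((n x)⁻¹ • x)) (r • w)) / r ^ 2
        = g ((n w)⁻¹ • w) * n w := by
    intro g w hw
    have h1 : ∀ r ∈ Ioi (0 : ℝ),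
        ({x | 1 < n x}.indicator (fun x => g ((n x)⁻¹ • x)) (r • w)) / r ^ 2
        = (Ioi (n w)⁻¹).indicator (fun r : ℝ => g ((n w)⁻¹ • w) * r ^ (-2 : ℝ)) r := by
      intro r hr
      have hr : 0 < r := hr
      have hiff : 1 < n (r • w) ↔ (n w)⁻¹ < r := by
        rw [hn_smul, abs_of_pos hr, inv_lt_iff_one_lt_mul₀ hw]
      by_cases h : (n w)⁻¹ < r
      · rw [indicator_of_mem (show r • w ∈ {x | 1 < n x} from hiff.2 h),
          indicator_of_mem (show r ∈ Ioi (n w)⁻¹ from h)]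
        have h2 : (n (r • w))⁻¹ • r • w = (n w)⁻¹ • w := by
          rw [hn_smul, abs_of_pos hr, smul_smul]
          congr 1
          field_simp
        rw [h2, Real.rpow_neg hr.le, div_eq_mul_inv]
        norm_num
      · rw [indicator_of_notMem (show r • w ∉ {x | 1 < n x} from fun h' => h (hiff.1 h')),
          indicator_of_notMem (show r ∉ Ioi (n w)⁻¹ from h)]
        simp
    have hpos : 0 < (n w)⁻¹ := inv_pos.2 hw
    rw [setIntegral_congr_fun measurableSet_Ioi h1, setIntegral_indicator measurableSet_Ioi,
      Ioi_inter_Ioi, sup_eq_right.2 hpos.le, integral_const_mul,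
      integral_Ioi_rpow_of_lt (by norm_num) hpos]
    norm_num [Real.rpow_neg hpos.le]
  have main : ∀ g : (Fin d → ℝ) → ℝ, Measurable g → (∃ C, ∀ x, |g x| ≤ C) →
      (∫ w in Δt, g w ∂Ψ = d * ∫ w in Δ, g ((n w)⁻¹ • w) * n w ∂Φ) := by
    rintro g hg ⟨C, hC⟩
    have key := hdual ({x | 1 < n x}.indicator (fun x => g ((n x)⁻¹ • x)))
      ((hg.comp (hmeas.inv.smul measurable_id)).indicator
        (measurableSet_lt measurable_const hmeas))
      ⟨C, fun x => by
        by_cases hx : x ∈ {x | 1 < n x}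
        · rw [indicator_of_mem hx]; exact hC _
        · rw [indicator_of_notMem hx, abs_zero]; exact (abs_nonneg _).trans (hC 0)⟩
      ⟨{x | n x < 1}, (isOpen_lt hcont continuous_const).mem_nhds (by simp [hn0]), fun x hx => by
        apply indicator_of_notMem
        intro h
        simp only [mem_setOf_eq] at h hx
        exact lt_asymm h hx⟩
    have e1 : ∀ w ∈ Δ, ∫ r in Ioi (0 : ℝ),
        ({x | 1 < n x}.indicator (fun x => g ((n x)⁻¹ • x)) (r • w)) / r ^ 2
        = g ((n w)⁻¹ • w) * n w := by
      intro w hw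
      apply hrad
      refine lt_of_le_of_ne (hn_nonneg w) fun h => ?_
      have h0 : w = 0 := (hn_eq_zero w).1 h.symm
      rw [hΔ] at hw
      have := hw.2
      simp [h0] at this
    have e2 : ∀ w ∈ Δt, ∫ r in Ioi (0 : ℝ),
        ({x | 1 < n x}.indicator (fun x => g ((n x)⁻¹ • x)) (r • w)) / r ^ 2
        = g w := by
      intro w hw
      rw [hΔt] at hw
      have h1 : n w = 1 := hw.2
      rw [hrad g w (by rw [h1]; norm_num), h1]
      simp
    rw [setIntegral_congr_fun hΔm e1, setIntegral_congr_fun hΔtm e2] at key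
    exact key.symm
  have mass : (Ψ Δt).toReal = d * ∫ w in Δ, n w ∂Φ := by
    have := main (fun _ => 1) measurable_const ⟨1, by simp⟩
    simpa [Measure.real] using this
  intro g hg hC
  refine ⟨main g hg hC, mass, ?_⟩
  rw [Measure.restrict_smul, integral_smul_measure, main g hg hC, ENNReal.toReal_inv, mass,
    smul_eq_mul, ← div_eq_inv_mul, mul_div_mul_left _ _ hd]
end
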